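/- arXiv:1104.2639 — 5 statements merged into one kernel-verified Lean document; each statement's English description precedes it below -/
import Mathlib

section
/- Suppose X is a separable metrizable space and K ⊆ ℝ^X is a compact space (with the pointwise topology) such that for every g ∈ K and every nonempty closed set F ⊆ X, the restricted function g|F has a point of continuity. Then every Radon probability measure μ on K is of countable Maharam type. -/
open MeasureTheory Set

/-!
Fix closed disjoint sets `A` and `B` of reals. Say that a countable set `C ⊆ X` leaves the
coordinate `x` undecided if, with positive probability, the coordinates in `C` exclude neither
`g x ∈ A` nor `g x ∈ B`. Suppose every countable `C` leaves some coordinate undecided, and take the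
events of positive measure that depend on countably many coordinates as forcing conditions. For
each basic open `U`, the essential union over `x ∈ U` of the undecided events is the same for all
large countable `C`. A condition meeting it can therefore be strengthened so as to decide
`g x ∈ A` for some new `x ∈ U`, while remaining undecided near `x`, and likewise for `B`. By
compactness, a generic sequence of conditions yields `g ∈ K` and two nonempty sets with the same
closure on which `g` takes values in `A` and in `B`, so `g` has no point of continuity on that
closure.

Hence countably many coordinates decide between `g x ≤ a` and `g x ≥ b` for all rationals `a < b`
and all `x`. They generate a countably generated `σ`-algebra with respect to which every evaluation
is measurable modulo null sets, and regularity of `μ` extends this to approximate all Borel sets.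
-/

open Filter Topology
open scoped ENNReal ProbabilityTheory

theorem exists_antitone_seq_of_forall_exists_le {P κ : Type*} [Preorder P] [Countable κ]
    (p : P) {𝒟 : κ → Set P} (h𝒟 : ∀ i q, ∃ r ∈ 𝒟 i, r ≤ q) :
    ∃ u : ℕ → P, Antitone u ∧ u 0 = p ∧ ∀ i, ∃ n, u n ∈ 𝒟 i := by
  have := Encodable.ofCountable κ
  let 𝒟' : κ → Order.Cofinal Pᵒᵈ := fun i ↦ ⟨OrderDual.ofDual ⁻¹' 𝒟 i, fun q ↦ h𝒟 i q.ofDual⟩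
  exact ⟨fun n ↦ (Order.sequenceOfCofinals (OrderDual.toDual p) 𝒟' n).ofDual,
    (Order.sequenceOfCofinals.monotone _ 𝒟').dual_right, rfl,
    fun i ↦ ⟨_, Order.sequenceOfCofinals.encode_mem _ 𝒟' i⟩⟩

theorem exists_countable_forall_le {α X : Type*} [CompleteLinearOrder α]
    [TopologicalSpace α] [OrderTopology α] [FirstCountableTopology α] {f : Set X → α}
    (hf : Antitone f) :
    ∃ C : Set X, C.Countable ∧ ∀ D : Set X, D.Countable → f C ≤ f D := by
  obtain ⟨u, -, hu, hmem⟩ := exists_seq_tendsto_sInf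
    (⟨f ∅, ∅, countable_empty, rfl⟩ : (f '' {C | C.Countable}).Nonempty) (OrderBot.bddBelow _)
  choose C hC hCu using hmem
  refine ⟨⋃ n, C n, countable_iUnion hC, fun D hD ↦ ?_⟩
  calc f (⋃ n, C n) ≤ sInf (f '' {C | C.Countable}) :=
        ge_of_tendsto' hu fun n ↦ (hf (subset_iUnion C n)).trans_eq (hCu n)
    _ ≤ f D := sInf_le ⟨D, hD, rfl⟩

section EssUnion

variable {Ω X : Type*} [MeasurableSpace Ω] {μ : Measure Ω}

theorem ae_le_compl_iff_aedisjoint {s t : Set Ω} : s ≤ᵐ[μ] (tᶜ : Set Ω) ↔ AEDisjoint μ s t := by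
  rw [ae_le_set, sdiff_compl, AEDisjoint]

theorem exists_countable_forall_superset_ae_eq [IsFiniteMeasure μ] {κ : Type*} [Countable κ]
    {S : κ → Set X → Set Ω} (hS : ∀ i C, C.Countable → MeasurableSet (S i C))
    (hanti : ∀ i C D, C ⊆ D → S i D ≤ᵐ[μ] S i C) :
    ∃ C : Set X, C.Countable ∧ ∀ D : Set X, D.Countable → C ⊆ D → ∀ i, S i D =ᵐ[μ] S i C := by
  have hmin (i : κ) : ∃ C : Set X, C.Countable ∧ ∀ D : Set X, D.Countable → μ (S i C) ≤ μ (S i D) :=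
    exists_countable_forall_le fun C D hCD ↦ measure_mono_ae (hanti i C D hCD)
  choose C hC hCmin using hmin
  refine ⟨⋃ i, C i, countable_iUnion hC, fun D hD hCD i ↦ ?_⟩
  refine ae_eq_of_ae_subset_of_measure_ge (hanti i _ _ hCD) ?_
    (hS i D hD).nullMeasurableSet (measure_ne_top _ _)
  exact (measure_mono_ae (hanti i _ _ (subset_iUnion C i))).trans (hCmin i D hD)

/-- `S` is the essential union of the sets `Q x`, `x ∈ U`: their least upper bound for inclusion
modulo `μ`-null sets. It replaces `⋃ x ∈ U, Q x` when `U` is uncountable. -/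
structure IsEssUnion (μ : Measure Ω) (U : Set X) (Q : X → Set Ω) (S : Set Ω) : Prop where
  ae_le : ∀ x ∈ U, Q x ≤ᵐ[μ] S
  ae_le_of_forall_ae_le : ∀ R : Set Ω, (∀ x ∈ U, Q x ≤ᵐ[μ] R) → S ≤ᵐ[μ] R

namespace IsEssUnion

variable {U : Set X} {Q Q' : X → Set Ω} {P S S' : Set Ω}

theorem congr (h : IsEssUnion μ U Q S) (hS : S' =ᵐ[μ] S) : IsEssUnion μ U Q S' where
  ae_le x hx := (h.ae_le x hx).trans_eq hS.symm
  ae_le_of_forall_ae_le R hR := hS.trans_le (h.ae_le_of_forall_ae_le R hR)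

theorem mono_ae (h : IsEssUnion μ U Q S) (h' : IsEssUnion μ U Q' S')
    (hQ : ∀ x ∈ U, Q x ≤ᵐ[μ] Q' x) : S ≤ᵐ[μ] S' :=
  h.ae_le_of_forall_ae_le S' fun x hx ↦ (hQ x hx).trans (h'.ae_le x hx)

theorem aedisjoint (h : IsEssUnion μ U Q S) (hP : ∀ x ∈ U, AEDisjoint μ (Q x) P) :
    AEDisjoint μ S P :=
  ae_le_compl_iff_aedisjoint.1 <| h.ae_le_of_forall_ae_le Pᶜ fun x hx ↦
    ae_le_compl_iff_aedisjoint.2 (hP x hx)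

end IsEssUnion

theorem exists_isEssUnion [IsFiniteMeasure μ] {Q : X → Set Ω} (hQ : ∀ x, MeasurableSet (Q x))
    (U : Set X) : ∃ S, MeasurableSet S ∧ IsEssUnion μ U Q S := by
  let S (T : Set X) : Set Ω := ⋃ t ∈ T ∩ U, Q t
  have hS (T : Set X) (hT : T.Countable) : MeasurableSet (S T) :=
    .biUnion (hT.mono inter_subset_left) fun t _ ↦ hQ t
  have hSmono {T T' : Set X} (h : T ⊆ T') : S T ⊆ S T' :=
    biUnion_subset_biUnion_left (inter_subset_inter_left U h)
  obtain ⟨T, hT, hstable⟩ := exists_countable_forall_superset_ae_eq (μ := μ) (κ := Unit)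
    (S := fun _ T ↦ (S T)ᶜ) (fun _ T hT ↦ (hS T hT).compl)
    fun _ T T' h ↦ (compl_subset_compl.2 (hSmono h)).eventuallyLE
  refine ⟨S T, hS T hT, ⟨fun x hx ↦ ?_, fun R hR ↦ ?_⟩⟩
  · have hxS : Q x ⊆ S (insert x T) :=
      subset_biUnion_of_mem (u := Q) (mem_inter (mem_insert x T) hx)
    exact hxS.eventuallyLE.trans_eq <| ae_eq_set_compl_compl.1 <|
      hstable _ (hT.insert x) (subset_insert x T) ()
  · have := Filter.EventuallyLE.countable_bUnion (hT.mono inter_subset_left : (T ∩ U).Countable)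
      fun t ht ↦ hR t ht.2
    exact this.trans (iUnion₂_subset fun _ _ ↦ Subset.rfl).eventuallyLE

theorem exists_countable_forall_superset_isEssUnion [IsFiniteMeasure μ] {κ : Type*} [Countable κ]
    {Q : Set X → X → Set Ω} (hQ : ∀ C x, MeasurableSet (Q C x))
    (hanti : ∀ C D x, C ⊆ D → Q D x ≤ᵐ[μ] Q C x) (U : κ → Set X) :
    ∃ C : Set X, C.Countable ∧ ∃ S : κ → Set Ω, ∀ D : Set X, D.Countable → C ⊆ D →
      ∀ i, IsEssUnion μ (U i) (Q D) (S i) := by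
  choose S hSm hS using fun i C ↦ exists_isEssUnion (μ := μ) (hQ C) (U i)
  obtain ⟨C, hC, hstable⟩ := exists_countable_forall_superset_ae_eq (fun i C _ ↦ hSm i C)
    fun i C D hCD ↦ (hS i D).mono_ae (hS i C) fun x _ ↦ hanti C D x hCD
  exact ⟨C, hC, fun i ↦ S i C, fun D hD hCD i ↦ (hS i D).congr (hstable D hD hCD i).symm⟩

end EssUnion

section CondSupport

variable {Ω : Type*} {m m' m0 : MeasurableSpace Ω} {μ : Measure Ω} {A R : Set Ω}

/-- The conditional support of `A` given `m`: the set where the conditional probability of `A`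
given `m` is nonzero. It is the smallest `m`-measurable set containing `A` modulo null sets. -/
def condSupport (m : MeasurableSpace Ω) {_ : MeasurableSpace Ω} (μ : Measure Ω) (A : Set Ω) :
    Set Ω :=
  {ω | (μ⟦A | m⟧) ω ≠ 0}

theorem measurableSet_condSupport : MeasurableSet[m] (condSupport m μ A) :=
  (stronglyMeasurable_condExp.measurable (measurableSet_singleton 0)).compl

theorem aedisjoint_condSupport_iff [IsFiniteMeasure μ] (hm : m ≤ m0) (hA : MeasurableSet A)
    (hR : MeasurableSet[m] R) : AEDisjoint μ R (condSupport m μ A) ↔ AEDisjoint μ R A := by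
  have hint : Integrable (A.indicator fun _ ↦ (1 : ℝ)) μ := (integrable_const 1).indicator hA
  have hnonneg : 0 ≤ᵐ[μ] μ⟦A | m⟧ :=
    condExp_nonneg (ae_of_all _ <| indicator_nonneg fun _ _ ↦ zero_le_one)
  have hmass : ∫ ω in R, (μ⟦A | m⟧) ω ∂μ = μ.real (R ∩ A) := by
    rw [setIntegral_condExp hm hint hR, setIntegral_indicator hA]
    simp
  calc AEDisjoint μ R (condSupport m μ A)
    _ ↔ ∀ᵐ ω ∂μ, ω ∈ R → (μ⟦A | m⟧) ω = 0 := by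
        simp only [AEDisjoint, ae_iff, condSupport, Classical.not_imp, inter_def, mem_ofPred_eq,
          ne_eq]
    _ ↔ μ⟦A | m⟧ =ᵐ[μ.restrict R] 0 := (ae_restrict_iff' (hm _ hR)).symm
    _ ↔ ∫ ω in R, (μ⟦A | m⟧) ω ∂μ = 0 := (setIntegral_eq_zero_iff_of_nonneg_ae
        (ae_restrict_of_ae hnonneg) integrable_condExp.integrableOn).symm
    _ ↔ AEDisjoint μ R A := by rw [hmass, measureReal_eq_zero_iff, AEDisjoint]

theorem ae_le_condSupport [IsFiniteMeasure μ] (hm : m ≤ m0) (hA : MeasurableSet A) :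
    A ≤ᵐ[μ] condSupport m μ A := by
  rw [← compl_compl (condSupport m μ A), ae_le_compl_iff_aedisjoint]
  exact ((aedisjoint_condSupport_iff hm hA measurableSet_condSupport.compl).1
    aedisjoint_compl_left).symm

theorem condSupport_ae_anti [IsFiniteMeasure μ] (hmm' : m ≤ m') (hm' : m' ≤ m0)
    (hA : MeasurableSet A) : condSupport m' μ A ≤ᵐ[μ] condSupport m μ A := by
  rw [← compl_compl (condSupport m μ A), ae_le_compl_iff_aedisjoint, AEDisjoint.comm,
    aedisjoint_condSupport_iff hm' hA (hmm' _ measurableSet_condSupport.compl), AEDisjoint.comm,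
    ← ae_le_compl_iff_aedisjoint, compl_compl]
  exact ae_le_condSupport (hmm'.trans hm') hA

end CondSupport

section PointOfContinuity

variable {X Y : Type*} [TopologicalSpace X] [TopologicalSpace Y]

/-- The point of continuity property: the restriction of `g` to every nonempty closed set has a
point of continuity. -/
def HasPointOfContinuityProperty (g : X → Y) : Prop :=
  ∀ F : Set X, IsClosed F → F.Nonempty → ∃ x ∈ F, ContinuousWithinAt g F x

theorem HasPointOfContinuityProperty.nonempty_closure_image_inter_closure_image
    {g : X → Y} (hg : HasPointOfContinuityProperty g)
    {A B : Set X} (hA : A.Nonempty) (hAB : A ⊆ closure B) (hBA : B ⊆ closure A) :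
    (closure (g '' A) ∩ closure (g '' B)).Nonempty := by
  obtain ⟨z, hzA, hz⟩ := hg (closure A) isClosed_closure hA.closure
  have hzB : z ∈ closure B := closure_minimal hAB isClosed_closure hzA
  exact ⟨g z, (hz.mono subset_closure).mem_closure_image hzA, (hz.mono hBA).mem_closure_image hzB⟩

end PointOfContinuity

section CoordinateProcess

variable {Ω X Y ι : Type*} [MeasurableSpace Y]

/-- The `σ`-algebra on `Ω` generated by the coordinates `φ · x`, `x ∈ C`. -/
abbrev coordSigma (φ : Ω → X → Y) (C : Set X) : MeasurableSpace Ω :=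
  MeasurableSpace.pi.comap fun ω (x : C) ↦ φ ω x

theorem measurable_coordSigma (φ : Ω → X → Y) {C : Set X} {x : X} (hx : x ∈ C) :
    Measurable[coordSigma φ C] (φ · x) :=
  @measurable_pi_iff _ _ _ (coordSigma φ C) _ _ |>.1 (comap_measurable _) ⟨x, hx⟩

theorem coordSigma_mono (φ : Ω → X → Y) {C D : Set X} (h : C ⊆ D) :
    coordSigma φ C ≤ coordSigma φ D :=
  Measurable.comap_le <| @measurable_pi_lambda _ _ _ (coordSigma φ D) _ _ fun x ↦
    measurable_coordSigma φ (h x.2)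

theorem coordSigma_le [m0 : MeasurableSpace Ω] {φ : Ω → X → Y} (hφ : ∀ x, Measurable (φ · x))
    (C : Set X) : coordSigma φ C ≤ m0 :=
  Measurable.comap_le <| measurable_pi_lambda _ fun x ↦ hφ x

theorem countablyGenerated_coordSigma [TopologicalSpace Y] [SecondCountableTopology Y]
    [BorelSpace Y] (φ : Ω → X → Y) {C : Set X} (hC : C.Countable) :
    @MeasurableSpace.CountablyGenerated Ω (coordSigma φ C) :=
  have := hC.to_subtype
  .comap _

variable [MeasurableSpace Ω] {μ : Measure Ω} {φ : Ω → X → Y} {F : ι → Set Y}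

/-- The event that the coordinates in `C` do not exclude any of the values `F j` for the coordinate
at `x`: each event `φ · x ∈ F j` has nonzero conditional probability given `coordSigma φ C`. -/
def undecidedSet (μ : Measure Ω) (φ : Ω → X → Y) (F : ι → Set Y) (C : Set X) (x : X) : Set Ω :=
  ⋂ j, condSupport (coordSigma φ C) μ {ω | φ ω x ∈ F j}

theorem measurableSet_undecidedSet [Countable ι] (C : Set X) (x : X) :
    MeasurableSet[coordSigma φ C] (undecidedSet μ φ F C x) :=
  MeasurableSet.iInter fun _ ↦ measurableSet_condSupport

theorem undecidedSet_ae_anti [IsFiniteMeasure μ] [Countable ι] (hφ : ∀ x, Measurable (φ · x))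
    (hF : ∀ j, MeasurableSet (F j)) {C D : Set X} (hCD : C ⊆ D) (x : X) :
    undecidedSet μ φ F D x ≤ᵐ[μ] undecidedSet μ φ F C x :=
  Filter.EventuallyLE.countable_iInter fun j ↦
    condSupport_ae_anti (coordSigma_mono φ hCD) (coordSigma_le hφ D) (hφ x (hF j))

/-- The forcing conditions: events of nonzero measure depending on countably many coordinates. -/
structure IsCondition (μ : Measure Ω) (φ : Ω → X → Y) (P : Set Ω) : Prop where
  measure_ne_zero : μ P ≠ 0
  exists_countable : ∃ D : Set X, D.Countable ∧ MeasurableSet[coordSigma φ D] P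

theorem isCondition_inter_undecidedSet_inter [IsFiniteMeasure μ] [Countable ι]
    (hφ : ∀ x, Measurable (φ · x)) (hF : ∀ j, MeasurableSet (F j)) {D : Set X} (hD : D.Countable)
    {P : Set Ω} (hP : MeasurableSet[coordSigma φ D] P) {x : X}
    (hPx : ¬ AEDisjoint μ (undecidedSet μ φ F D x) P) (j : ι) :
    IsCondition μ φ (P ∩ undecidedSet μ φ F D x ∩ {ω | φ ω x ∈ F j}) := by
  have hR : MeasurableSet[coordSigma φ D] (P ∩ undecidedSet μ φ F D x) :=
    hP.inter (measurableSet_undecidedSet D x)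
  refine ⟨fun h ↦ hPx ?_, insert x D, hD.insert x, ?_⟩
  · have hdisj : AEDisjoint μ _ (condSupport _ μ {ω | φ ω x ∈ F j}) :=
      (aedisjoint_condSupport_iff (coordSigma_le hφ D) (hφ x (hF j)) hR).2 h
    have hsub : undecidedSet μ φ F D x ⊆ condSupport (coordSigma φ D) μ {ω | φ ω x ∈ F j} :=
      iInter_subset _ j
    rwa [AEDisjoint, inter_assoc, inter_eq_self_of_subset_left hsub, inter_comm] at hdisj
  · exact (coordSigma_mono φ (subset_insert x D) _ hR).inter
      (measurable_coordSigma φ (mem_insert x D) (hF j))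

/-- The condition `P` forces `φ · x ∈ A`, and also the events `S i` for all `i` with `x ∈ U i`.
Here `S i` stands for the event that some coordinate in `U i` is undecided, so that the conditions
below `P` can still choose new coordinates in every `U i` containing `x`. -/
structure Forces {κ : Type*} (μ : Measure Ω) (φ : Ω → X → Y) (U : κ → Set X) (S : κ → Set Ω)
    (A : Set Y) (P : Set Ω) (x : X) : Prop where
  subset : P ⊆ {ω | φ ω x ∈ A}
  ae_le : ∀ i, x ∈ U i → P ≤ᵐ[μ] S i

section

variable {κ : Type*} [Countable ι] {C₀ : Set X} {U : κ → Set X} {S : κ → Set Ω}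

theorem exists_isCondition_subset_forces [IsFiniteMeasure μ] (hφ : ∀ x, Measurable (φ · x))
    (hF : ∀ j, MeasurableSet (F j)) (hC₀ : C₀.Countable)
    (hS : ∀ D : Set X, D.Countable → C₀ ⊆ D →
      ∀ i, IsEssUnion μ (U i) (undecidedSet μ φ F D) (S i))
    {P : Set Ω} (hP : IsCondition μ φ P) (i : κ) (j : ι) :
    ∃ P', IsCondition μ φ P' ∧ P' ⊆ P ∧
      (AEDisjoint μ P' (S i) ∨ ∃ x ∈ U i, Forces μ φ U S (F j) P' x) := by
  by_cases hPS : AEDisjoint μ (S i) P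
  · exact ⟨P, hP, Subset.rfl, .inl hPS.symm⟩
  obtain ⟨D₀, hD₀, hPD₀⟩ := hP.exists_countable
  let D := D₀ ∪ C₀
  have hD : D.Countable := hD₀.union hC₀
  have hSD := hS D hD subset_union_right
  obtain ⟨x, hxi, hPx⟩ : ∃ x ∈ U i, ¬ AEDisjoint μ (undecidedSet μ φ F D x) P := by
    by_contra! h
    exact hPS ((hSD i).aedisjoint h)
  have hPD : MeasurableSet[coordSigma φ D] P := coordSigma_mono φ subset_union_left P hPD₀
  refine ⟨P ∩ undecidedSet μ φ F D x ∩ {ω | φ ω x ∈ F j},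
    isCondition_inter_undecidedSet_inter hφ hF hD hPD hPx j,
    inter_subset_left.trans inter_subset_left, .inr ⟨x, hxi, inter_subset_right, fun k hxk ↦ ?_⟩⟩
  exact (inter_subset_left.trans inter_subset_right).eventuallyLE.trans ((hSD k).ae_le x hxk)

theorem exists_generic_seq [IsFiniteMeasure μ] [Countable κ] (hφ : ∀ x, Measurable (φ · x))
    (hF : ∀ j, MeasurableSet (F j)) (hC₀ : C₀.Countable)
    (hS : ∀ D : Set X, D.Countable → C₀ ⊆ D →
      ∀ i, IsEssUnion μ (U i) (undecidedSet μ φ F D) (S i))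
    {P : Set Ω} (hP : IsCondition μ φ P) :
    ∃ u : ℕ → Set Ω, Antitone u ∧ u 0 = P ∧ (∀ n, μ (u n) ≠ 0) ∧
      ∀ i j, ∃ n, AEDisjoint μ (u n) (S i) ∨ ∃ x ∈ U i, Forces μ φ U S (F j) (u n) x := by
  obtain ⟨u, hu, hu0, hgeneric⟩ := exists_antitone_seq_of_forall_exists_le
    (⟨P, hP⟩ : {P // IsCondition μ φ P})
    (𝒟 := fun p : κ × ι ↦ {P | AEDisjoint μ P.1 (S p.1) ∨
      ∃ x ∈ U p.1, Forces μ φ U S (F p.2) P.1 x})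
    fun p P ↦
      have ⟨P', hP', hP'P, h⟩ := exists_isCondition_subset_forces hφ hF hC₀ hS P.2 p.1 p.2
      ⟨⟨P', hP'⟩, h, hP'P⟩
  exact ⟨fun n ↦ u n, hu, congrArg Subtype.val hu0, fun n ↦ (u n).2.measure_ne_zero,
    fun i j ↦ hgeneric (i, j)⟩

end

theorem exists_seq_eventually_mem_subset_closure [TopologicalSpace X] [SecondCountableTopology X]
    [IsFiniteMeasure μ] [Countable ι] (hφ : ∀ x, Measurable (φ · x))
    (hF : ∀ j, MeasurableSet (F j))
    (hundecided : ∀ C : Set X, C.Countable → ∃ x, μ (undecidedSet μ φ F C x) ≠ 0) :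
    ∃ (ω : ℕ → Ω) (T : ι → Set X), (∀ j, (T j).Nonempty) ∧ (∀ j k, T j ⊆ closure (T k)) ∧
      ∀ j, ∀ x ∈ T j, ∀ᶠ n in atTop, φ (ω n) x ∈ F j := by
  have hU := TopologicalSpace.isBasis_countableBasis X
  let U : TopologicalSpace.countableBasis X → Set X := (↑)
  have hle := coordSigma_le hφ
  obtain ⟨C₀, hC₀, S, hS⟩ := exists_countable_forall_superset_isEssUnion (μ := μ)
    (fun C x ↦ hle C _ (measurableSet_undecidedSet (F := F) C x))
    (fun C D x h ↦ undecidedSet_ae_anti hφ hF h x) U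
  obtain ⟨x₀, hx₀⟩ := hundecided C₀ hC₀
  obtain ⟨u, hu, hu0, huμ, hgeneric⟩ := exists_generic_seq hφ hF hC₀ hS
    (⟨hx₀, C₀, hC₀, measurableSet_undecidedSet C₀ x₀⟩ : IsCondition μ φ _)
  let T (j : ι) : Set X := {x | ∃ n, Forces μ φ U S (F j) (u n) x}
  have hmeets {n i} (hni : u n ≤ᵐ[μ] S i) (j : ι) : (U i ∩ T j).Nonempty := by
    obtain ⟨n', hdisj | ⟨x, hxi, hx⟩⟩ := hgeneric i j
    · have hself : AEDisjoint μ (u (max n n')) (u (max n n')) :=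
        hdisj.mono_ae (hu (le_max_right n n')).eventuallyLE
          ((hu (le_max_left n n')).eventuallyLE.trans hni)
      rw [AEDisjoint, inter_self] at hself
      exact absurd hself (huμ _)
    · exact ⟨x, hxi, n', hx⟩
  choose ω hω using fun n ↦ nonempty_of_measure_ne_zero (huμ n)
  refine ⟨ω, T, fun j ↦ ?_, fun j k x ⟨n, hx⟩ ↦ hU.mem_closure_iff.2 fun s hs hxs ↦ ?_,
    fun j x ⟨n, hx⟩ ↦ (eventually_ge_atTop n).mono fun n' hn' ↦ hx.subset (hu hn' (hω n'))⟩
  · obtain ⟨s, hs, hxs, -⟩ := hU.exists_subset_of_mem_open (mem_univ x₀) isOpen_univ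
    have hu0S : u 0 ≤ᵐ[μ] S ⟨s, hs⟩ := by
      rw [hu0]
      exact (hS C₀ hC₀ Subset.rfl _).ae_le x₀ hxs
    exact (hmeets hu0S j).mono inter_subset_right
  · exact hmeets (hx.ae_le ⟨s, hs⟩ hxs) k

section Compact

variable [TopologicalSpace Ω] [CompactSpace Ω] [OpensMeasurableSpace Ω] [IsFiniteMeasure μ]
  [TopologicalSpace X] [SecondCountableTopology X] [TopologicalSpace Y] [BorelSpace Y]
  {A B : Set Y}

theorem exists_countable_forall_measure_undecidedSet_eq_zero
    (hφ : ∀ x, Continuous (φ · x)) (hpc : ∀ ω, HasPointOfContinuityProperty (φ ω))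
    (hA : IsClosed A) (hB : IsClosed B) (hAB : Disjoint A B) :
    ∃ C : Set X, C.Countable ∧ ∀ x, μ (undecidedSet μ φ ![A, B] C x) = 0 := by
  by_contra! hundecided
  have hF : ∀ j, IsClosed (![A, B] j) := Fin.forall_fin_two.2 ⟨hA, hB⟩
  obtain ⟨ω, T, hT, hclosure, hmem⟩ := exists_seq_eventually_mem_subset_closure
    (fun x ↦ (hφ x).measurable) (fun j ↦ (hF j).measurableSet) hundecided
  obtain ⟨ω₀, hω₀⟩ := exists_clusterPt_of_compactSpace (map ω atTop)
  have himage (j : Fin 2) : closure (φ ω₀ '' T j) ⊆ ![A, B] j := by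
    refine closure_minimal (image_subset_iff.2 fun x hx ↦ ?_) (hF j)
    exact isClosed_iff_clusterPt.1 ((hF j).preimage (hφ x)) ω₀
      (hω₀.mono (le_principal_iff.2 (hmem j x hx)))
  obtain ⟨y, hy⟩ := (hpc ω₀).nonempty_closure_image_inter_closure_image (hT 0)
    (hclosure 0 1) (hclosure 1 0)
  exact hAB.notMem_of_mem_left (himage 0 hy.1) (himage 1 hy.2)

theorem exists_countable_forall_exists_measurableSet_separating
    (hφ : ∀ x, Continuous (φ · x)) (hpc : ∀ ω, HasPointOfContinuityProperty (φ ω))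
    (hA : IsClosed A) (hB : IsClosed B) (hAB : Disjoint A B) :
    ∃ C : Set X, C.Countable ∧ ∀ x, ∃ H, MeasurableSet[coordSigma φ C] H ∧
      {ω | φ ω x ∈ A} ≤ᵐ[μ] H ∧ AEDisjoint μ H {ω | φ ω x ∈ B} := by
  obtain ⟨C, hC, hnull⟩ := exists_countable_forall_measure_undecidedSet_eq_zero (μ := μ) hφ hpc
    hA hB hAB
  have hle := coordSigma_le (fun x ↦ (hφ x).measurable) C
  have hmeas {E : Set Y} (hE : IsClosed E) (x : X) : MeasurableSet {ω | φ ω x ∈ E} :=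
    (hφ x).measurable hE.measurableSet
  refine ⟨C, hC, fun x ↦ ⟨condSupport (coordSigma φ C) μ {ω | φ ω x ∈ A},
    measurableSet_condSupport, ae_le_condSupport hle (hmeas hA x), ?_⟩⟩
  refine (aedisjoint_condSupport_iff hle (hmeas hB x) measurableSet_condSupport).1 ?_
  refine measure_mono_null (fun ω hω ↦ ?_) (hnull x)
  exact mem_iInter.2 (Fin.forall_fin_two.2 hω)

end Compact

end CoordinateProcess

section Approximation

variable {Ω : Type*}

theorem eventuallyMeasurable_of_forall_rat_lt {m : MeasurableSpace Ω} {l : Filter Ω}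
    [CountableInterFilter l] {g : Ω → ℝ}
    (h : ∀ a b : ℚ, a < b → ∃ H, MeasurableSet[m] H ∧ {ω | g ω ≤ a} ≤ᶠ[l] H ∧
      H ≤ᶠ[l] {ω | g ω < b}) : EventuallyMeasurable m l g := by
  refine @measurable_of_Iio ℝ Ω _ _ _ (eventuallyMeasurableSpace m l) _ _ _ g fun r ↦ ?_
  let J := {p : ℚ × ℚ // p.1 < p.2 ∧ (p.2 : ℝ) < r}
  choose H hHm hle hlt using fun p : J ↦ h p.1.1 p.1.2 p.2.1
  have hbelow : g ⁻¹' Iio r ⊆ ⋃ p : J, {ω | g ω ≤ p.1.1} := fun ω (hω : g ω < r) ↦ by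
    obtain ⟨b, hgb, hbr⟩ := exists_rat_btwn hω
    obtain ⟨a, hga, hab⟩ := exists_rat_btwn hgb
    exact mem_iUnion.2 ⟨⟨(a, b), mod_cast hab, hbr⟩, hga.le⟩
  have habove : ⋃ p : J, {ω | g ω < p.1.2} ⊆ g ⁻¹' Iio r :=
    iUnion_subset fun p ω hω ↦ hω.trans p.2.2
  exact ⟨⋃ p, H p, .iUnion hHm, Filter.EventuallyLE.antisymm
    (hbelow.eventuallyLE.trans <| Filter.EventuallyLE.countable_iUnion hle)
    ((Filter.EventuallyLE.countable_iUnion hlt).trans habove.eventuallyLE)⟩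

theorem exists_measurableSet_between_of_isTopologicalBasis [TopologicalSpace Ω]
    {m : MeasurableSpace Ω} {b : Set (Set Ω)} (hb : TopologicalSpace.IsTopologicalBasis b)
    (hbm : ∀ s ∈ b, MeasurableSet s) {Z V : Set Ω} (hZ : IsCompact Z) (hV : IsOpen V)
    (hZV : Z ⊆ V) : ∃ W, MeasurableSet W ∧ Z ⊆ W ∧ W ⊆ V := by
  refine hZ.induction_on (p := fun Z ↦ ∃ W, MeasurableSet W ∧ Z ⊆ W ∧ W ⊆ V)
    ⟨∅, .empty, Subset.rfl, empty_subset V⟩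
    (fun Z Z' hZZ' ⟨W, hW, hZW, hWV⟩ ↦ ⟨W, hW, hZZ'.trans hZW, hWV⟩)
    (fun Z Z' ⟨W, hW, hZW, hWV⟩ ⟨W', hW', hZW', hWV'⟩ ↦
      ⟨W ∪ W', hW.union hW', union_subset_union hZW hZW', union_subset hWV hWV'⟩)
    fun z hz ↦ ?_
  obtain ⟨s, hs, hzs, hsV⟩ := hb.exists_subset_of_mem_open (hZV hz) hV
  exact ⟨s, mem_nhdsWithin_of_mem_nhds (hb.mem_nhds hs hzs), s, hbm s hs, Subset.rfl, hsV⟩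

theorem exists_measurableSet_between_of_isInducing {X Y : Type*} [TopologicalSpace Ω]
    [TopologicalSpace Y] [MeasurableSpace Y] [OpensMeasurableSpace Y] {φ : Ω → X → Y}
    (hφ : IsInducing φ) {m : MeasurableSpace Ω} (hφm : ∀ x, Measurable (φ · x))
    {Z V : Set Ω} (hZ : IsCompact Z) (hV : IsOpen V) (hZV : Z ⊆ V) :
    ∃ W, MeasurableSet W ∧ Z ⊆ W ∧ W ⊆ V := by
  have hb := isTopologicalBasis_pi fun _ : X ↦ TopologicalSpace.isTopologicalBasis_opens (α := Y)
  refine exists_measurableSet_between_of_isTopologicalBasis (hb.isInducing hφ) ?_ hZ hV hZV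
  rintro _ ⟨_, ⟨U, I, hU, rfl⟩, rfl⟩
  have : φ ⁻¹' (I : Set X).pi U = ⋂ x ∈ I, (φ · x) ⁻¹' U x := by
    ext
    simp
  rw [this]
  exact I.measurableSet_biInter fun x hx ↦ hφm x (hU x hx).measurableSet

theorem isSeparable_of_forall_exists_eventuallyMeasurableSet {m m0 : MeasurableSpace Ω}
    {μ : Measure Ω} [IsFiniteMeasure μ] (hm : m ≤ m0)
    (hcg : @MeasurableSpace.CountablyGenerated Ω m)
    (happrox : ∀ B, MeasurableSet B → ∀ ε : ℝ, 0 < ε →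
      ∃ W, EventuallyMeasurableSet m (ae μ) W ∧ μ (symmDiff B W) < ENNReal.ofReal ε) :
    IsSeparable μ := by
  have := isFiniteMeasure_trim (μ := μ) hm
  obtain ⟨𝒜, h𝒜, h𝒜m, hdense⟩ := @exists_countable_measureDense Ω m (μ.trim hm) inferInstance
  refine ⟨𝒜, h𝒜, fun A hA ↦ hm A (h𝒜m A hA), fun B hB _ ε hε ↦ ?_⟩
  obtain ⟨W, ⟨t, ht, hWt⟩, hBW⟩ := happrox B hB (ε / 2) (half_pos hε)
  obtain ⟨A, hA, htA⟩ := hdense t ht (@measure_ne_top _ m _ _ t) (ε / 2) (half_pos hε)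
  refine ⟨A, hA, ?_⟩
  calc μ (symmDiff B A) ≤ μ (symmDiff B W) + (μ (symmDiff W t) + μ (symmDiff t A)) :=
        (measure_symmDiff_le B W A).trans (by gcongr; exact measure_symmDiff_le W t A)
    _ = μ (symmDiff B W) + μ (symmDiff t A) := by
        rw [measure_symmDiff_eq_zero_iff.2 hWt, zero_add]
    _ < ENNReal.ofReal (ε / 2) + ENNReal.ofReal (ε / 2) :=
        ENNReal.add_lt_add hBW ((le_trim hm).trans_lt htA)
    _ = ENNReal.ofReal ε := by
        rw [← ENNReal.ofReal_add (half_pos hε).le (half_pos hε).le, add_halves]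

theorem exists_isClosed_isOpen_subset_measure_sdiff_lt [TopologicalSpace Ω] [MeasurableSpace Ω]
    [OpensMeasurableSpace Ω] {μ : Measure Ω} [IsFiniteMeasure μ] [μ.WeaklyRegular] {B : Set Ω}
    (hB : MeasurableSet B) {ε : ℝ≥0∞} (hε : ε ≠ 0) :
    ∃ Z V, IsClosed Z ∧ IsOpen V ∧ Z ⊆ B ∧ B ⊆ V ∧ μ (V \ Z) < ε := by
  have hε2 : ε / 2 ≠ 0 := (ENNReal.half_pos hε).ne'
  obtain ⟨Z, hZB, hZ, hBZ⟩ := hB.exists_isClosed_sdiff_lt (measure_ne_top μ B) hε2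
  obtain ⟨V, hBV, hV, -, hVB⟩ := hB.exists_isOpen_sdiff_lt (measure_ne_top μ B) hε2
  refine ⟨Z, V, hZ, hV, hZB, hBV, ?_⟩
  calc μ (V \ Z) ≤ μ (V \ B) + μ (B \ Z) :=
        (measure_mono (sdiff_triangle V B Z)).trans (measure_union_le _ _)
    _ < ε / 2 + ε / 2 := ENNReal.add_lt_add hVB hBZ
    _ = ε := ENNReal.add_halves ε

end Approximation

theorem countable_maharam_type_of_pointwise_continuity_points_general {Ω X : Type*}
    [TopologicalSpace Ω] [CompactSpace Ω] [MeasurableSpace Ω] [BorelSpace Ω]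
    [TopologicalSpace X] [SecondCountableTopology X] {φ : Ω → X → ℝ} (hφ : IsInducing φ)
    (hpc : ∀ ω, HasPointOfContinuityProperty (φ ω)) (μ : Measure Ω) [μ.Regular] :
    IsSeparable μ := by
  have := hφ.r1Space
  have hφc (x : X) : Continuous (φ · x) := (continuous_apply x).comp hφ.continuous
  choose C hC hsep using fun p : {p : ℚ × ℚ // p.1 < p.2} ↦
    exists_countable_forall_exists_measurableSet_separating (μ := μ) hφc hpc
      (isClosed_Iic (a := (p.1.1 : ℝ))) (isClosed_Ici (a := (p.1.2 : ℝ)))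
      (Iic_disjoint_Ici.2 (not_le.2 (mod_cast p.2)))
  let D := ⋃ p, C p
  have hmeas (x : X) : EventuallyMeasurable (coordSigma φ D) (ae μ) (φ · x) := by
    refine eventuallyMeasurable_of_forall_rat_lt fun a b hab ↦ ?_
    obtain ⟨H, hH, haH, hHb⟩ := hsep ⟨(a, b), hab⟩ x
    refine ⟨H, coordSigma_mono φ (subset_iUnion C _) H hH, haH, ?_⟩
    simpa only [compl_ofPred, mem_Ici, not_le] using ae_le_compl_iff_aedisjoint.2 hHb
  refine isSeparable_of_forall_exists_eventuallyMeasurableSet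
    (coordSigma_le (fun x ↦ (hφc x).measurable) D)
    (countablyGenerated_coordSigma φ (countable_iUnion hC)) fun B hB ε hε ↦ ?_
  obtain ⟨Z, V, hZ, hV, hZB, hBV, hZV⟩ :=
    exists_isClosed_isOpen_subset_measure_sdiff_lt (μ := μ) hB (ENNReal.ofReal_pos.2 hε).ne'
  obtain ⟨W, hW, hZW, hWV⟩ := exists_measurableSet_between_of_isInducing
    (m := eventuallyMeasurableSpace _ _) hφ hmeas hZ.isCompact hV (hZB.trans hBV)
  refine ⟨W, hW, (measure_mono ?_).trans_lt hZV⟩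
  exact union_subset (sdiff_subset_sdiff hBV hZW) (sdiff_subset_sdiff hWV hZB)

theorem countable_maharam_type_of_pointwise_continuity_points
    {X : Type*} [TopologicalSpace X] [TopologicalSpace.SeparableSpace X]
    [TopologicalSpace.MetrizableSpace X]
    (K : Set (X → ℝ)) (hK : IsCompact K)
    (hpc : ∀ g ∈ K, ∀ F : Set X, IsClosed F → F.Nonempty →
      ∃ x ∈ F, ContinuousWithinAt g F x)
    [MeasurableSpace K] [BorelSpace K]
    (μ : Measure K) [IsProbabilityMeasure μ] [μ.Regular] :
    ∃ 𝓕 : Set (Set K), 𝓕.Countable ∧ (∀ A ∈ 𝓕, MeasurableSet A) ∧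
      ∀ B : Set K, MeasurableSet B → ∀ ε : ℝ, 0 < ε →
        ∃ A ∈ 𝓕, μ (symmDiff B A) < ENNReal.ofReal ε := by
  have := isCompact_iff_compactSpace.1 hK
  have : SecondCountableTopology X :=
    let := TopologicalSpace.metrizableSpaceMetric X
    UniformSpace.secondCountable_of_separable X
  have := countable_maharam_type_of_pointwise_continuity_points_general
    (φ := Subtype.val) .subtypeVal (fun g ↦ hpc g.1 g.2) μ
  obtain ⟨𝓕, h𝓕, hdense⟩ := exists_countable_measureDense μ
  exact ⟨𝓕, h𝓕, hdense.measurable, fun B hB ↦ hdense.approx B hB (measure_ne_top μ B)⟩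
end

section
/- Suppose X is a separable metrizable space and K ⊆ ℝ^X is a compact space (with the pointwise topology) such that for every g ∈ K and every nonempty closed set F ⊆ X, the restricted function g|F has a point of continuity. Let μ be a Radon probability measure on K and, for x ∈ X and r ∈ ℝ, put L(x,r) = {g ∈ K : g(x) ≤ r}. Then for every fixed q ∈ ℝ there is a countable set X(q) ⊆ X such that for every x ∈ X, inf{μ(L(y,q) Δ L(x,q)) : y ∈ X(q)} = 0. -/
open MeasureTheory Set

/-!
Condition on the values of `g` at a countable set `Z ⊆ X`, and call an event undecided by `Z` at `x`
if, conditionally, both `g x ≤ q` and `r ≤ g x` have positive probability on it, where `q < r`.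

If some `Z` leaves only null undecided events, then each `{g x ≤ q}` is, up to the small event
`{q < g x < r}`, measurable with respect to the countably many values on `Z`, and letting `r ↓ q`
shows that the sets `{g x ≤ q}` are separable for `μ(· ∆ ·)`.

Otherwise, undecided events persist beyond every countable set. Consider the pairs `(x, C)` of a
point `x` and an event `C` undecided at `x` by some countable `Z ⊇ W`. By exhaustion, `W` can be
chosen countable and such that, for every such pair with `x` in a basic open set `V`, the event `C`
is almost covered by countably many traces `C' ∩ {g x' ≤ q}` of pairs `(x', C')` with `x' ∈ V`, and
likewise with `{r ≤ g x'}`. Hence some countable set `T` of pairs contains all these covers of its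
own members. With positive probability, `F = {x | g ∈ C for some (x, C) ∈ T}` is nonempty and `g`
takes both values `≤ q` and values `≥ r` on `F` near each point of `F`. Such a `g` has no point of
continuity on the closure of `F`.
-/

open Filter Topology TopologicalSpace
open scoped symmDiff

section RandomFunctions

variable {Ω X ι : Type*} {m₀ : MeasurableSpace Ω} {μ : Measure Ω}

section Exhaustion

theorem exists_ae_greatest_of_iUnion_mem [IsFiniteMeasure μ] {𝒞 : Set (Set Ω)}
    (hne : 𝒞.Nonempty) (hmeas : ∀ s ∈ 𝒞, NullMeasurableSet s μ)
    (hUnion : ∀ s : ℕ → Set Ω, (∀ n, s n ∈ 𝒞) → ⋃ n, s n ∈ 𝒞) :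
    ∃ s ∈ 𝒞, ∀ t ∈ 𝒞, t ≤ᵐ[μ] s := by
  obtain ⟨u, -, hu, humem⟩ := exists_seq_tendsto_sSup (hne.image μ) (OrderTop.bddAbove _)
  choose s hs hsu using humem
  set S := ⋃ n, s n
  have hSmem : S ∈ 𝒞 := hUnion s hs
  have hSmax : ∀ t ∈ 𝒞, μ t ≤ μ S := fun t ht =>
    (le_sSup (mem_image_of_mem μ ht)).trans <| le_of_tendsto' hu fun n =>
      (hsu n).ge.trans (measure_mono (subset_iUnion s n))
  refine ⟨S, hSmem, fun t ht => ?_⟩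
  have hunion : t ∪ S ∈ 𝒞 := by
    have h := hUnion (fun n => Nat.casesOn n t s) (Nat.rec ht fun n _ => hs n)
    rwa [← union_iUnion_nat_succ] at h
  exact subset_union_left.eventuallyLE.trans (ae_eq_of_subset_of_measure_ge subset_union_right
    (hSmax _ hunion) (hmeas S hSmem) (measure_ne_top μ _)).symm.le

theorem exists_countable_subset_ae_le_biUnion [IsFiniteMeasure μ] {s : ι → Set Ω} {I : Set ι}
    (hs : ∀ i ∈ I, NullMeasurableSet (s i) μ) :
    ∃ t ⊆ I, t.Countable ∧ ∀ i ∈ I, s i ≤ᵐ[μ] ⋃ j ∈ t, s j := by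
  obtain ⟨_, ⟨t, htI, ht, rfl⟩, hmax⟩ := exists_ae_greatest_of_iUnion_mem (μ := μ)
    (𝒞 := {u | ∃ t ⊆ I, t.Countable ∧ ⋃ j ∈ t, s j = u})
    ⟨_, ∅, empty_subset I, countable_empty, rfl⟩
    (by
      rintro _ ⟨t, htI, ht, rfl⟩
      exact .biUnion ht fun i hi => hs i (htI hi))
    (by
      intro u hu
      choose t htI ht hu using hu
      exact ⟨⋃ n, t n, iUnion_subset htI, countable_iUnion ht, by simp only [biUnion_iUnion, hu]⟩)
  exact ⟨t, htI, ht, fun i hi =>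
    hmax _ ⟨{i}, singleton_subset_iff.2 hi, countable_singleton i, biUnion_singleton i s⟩⟩

theorem exists_countable_forall_measure_inter_ne_zero [IsFiniteMeasure μ]
    {T : Set X → Set (Set Ω)} (hT : Antitone T) :
    ∃ W : Set X, W.Countable ∧ ∀ C ∈ T W, ∀ D ⊆ C, MeasurableSet D → μ D ≠ 0 →
      ∀ W' : Set X, W'.Countable → ∃ C' ∈ T W', μ (D ∩ C') ≠ 0 := by
  obtain ⟨N, ⟨-, W, hW, hN⟩, hmax⟩ := exists_ae_greatest_of_iUnion_mem (μ := μ)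
    (𝒞 := {N | MeasurableSet N ∧ ∃ W : Set X, W.Countable ∧ ∀ C ∈ T W, μ (N ∩ C) = 0})
    ⟨∅, .empty, ∅, countable_empty, by simp⟩ (fun N hN => hN.1.nullMeasurableSet)
    (by
      intro N hN
      choose hNm W hW hN using hN
      refine ⟨.iUnion hNm, ⋃ n, W n, countable_iUnion hW, fun C hC => ?_⟩
      rw [iUnion_inter, measure_iUnion_null_iff]
      exact fun n => hN n C (hT (subset_iUnion W n) hC))
  refine ⟨W, hW, fun C hC D hDC hD hμD W' hW' => ?_⟩
  by_contra! hnull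
  have hDN : (D ∩ C : Set Ω) ≤ᵐ[μ] (N ∩ C : Set Ω) :=
    (hmax D ⟨hD, W', hW', hnull⟩).inter EventuallyLE.rfl
  exact hμD (inter_eq_left.2 hDC ▸ measure_mono_null_ae hDN (hN C hC))

end Exhaustion

section ConditionalPositivity

/-- The conditional probability of `A` given `m` is positive almost everywhere on `C`. This is
expressed through `m`-measurable subsets of `C`, which avoids conditional expectations. -/
def IsCondPositiveOn (m : MeasurableSpace Ω) {m₀ : MeasurableSpace Ω} (μ : Measure[m₀] Ω)
    (A C : Set Ω) : Prop :=
  ∀ D ⊆ C, MeasurableSet[m] D → μ (D ∩ A) = 0 → μ D = 0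

theorem IsCondPositiveOn.mono {m : MeasurableSpace Ω} {A C C' : Set Ω}
    (h : IsCondPositiveOn m μ A C) (hC : C' ⊆ C) : IsCondPositiveOn m μ A C' :=
  fun D hD => h D (hD.trans hC)

theorem exists_isCondPositiveOn_measure_sdiff_eq_zero [IsFiniteMeasure μ] {m : MeasurableSpace Ω}
    (hm : m ≤ m₀) (A : Set Ω) :
    ∃ P, MeasurableSet[m] P ∧ IsCondPositiveOn m μ A P ∧ μ (A \ P) = 0 := by
  obtain ⟨N, ⟨hN, hNA⟩, hmax⟩ := exists_ae_greatest_of_iUnion_mem (μ := μ)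
    (𝒞 := {N | MeasurableSet[m] N ∧ μ (N ∩ A) = 0}) ⟨∅, .empty, by simp⟩
    (fun N hN => (hm N hN.1).nullMeasurableSet)
    (fun N hN => ⟨.iUnion fun n => (hN n).1, by
      rw [iUnion_inter, measure_iUnion_null_iff]
      exact fun n => (hN n).2⟩)
  refine ⟨Nᶜ, hN.compl, fun D hDN hD hDA => ?_, by
    rwa [Set.sdiff_compl, inter_comm]⟩
  rw [← (disjoint_compl_left.mono_left hDN).sdiff_eq_left]
  exact ae_le_set.1 (hmax D ⟨hD, hDA⟩)

theorem exists_measurableSet_measure_symmDiff_le [IsFiniteMeasure μ] {m : MeasurableSpace Ω}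
    (hm : m ≤ m₀) {A B : Set Ω}
    (hnull : ∀ C, MeasurableSet[m] C → IsCondPositiveOn m μ A C → IsCondPositiveOn m μ B C →
      μ C = 0) :
    ∃ D, MeasurableSet[m] D ∧ μ (A ∆ D) ≤ μ (A ∪ B)ᶜ := by
  obtain ⟨P, hP, hPA, hAP⟩ := exists_isCondPositiveOn_measure_sdiff_eq_zero (μ := μ) hm A
  obtain ⟨Q, hQ, hQB, hBQ⟩ := exists_isCondPositiveOn_measure_sdiff_eq_zero (μ := μ) hm B
  have hPQ : μ (P ∩ Q) = 0 :=
    hnull _ (hP.inter hQ) (hPA.mono inter_subset_left) (hQB.mono inter_subset_right)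
  refine ⟨P, hP, ?_⟩
  calc μ (A ∆ P)
      ≤ μ ((A ∪ B)ᶜ ∪ (A \ P ∪ (B \ Q ∪ P ∩ Q))) := measure_mono fun ω => by
        simp only [mem_symmDiff, mem_union, mem_compl_iff, Set.mem_sdiff, mem_inter_iff]
        tauto
    _ ≤ μ (A ∪ B)ᶜ + μ (A \ P ∪ (B \ Q ∪ P ∩ Q)) := measure_union_le _ _
    _ = μ (A ∪ B)ᶜ := by
        rw [measure_union_null hAP (measure_union_null hBQ hPQ), add_zero]

end ConditionalPositivity

section UndecidedPairs

variable {m : X → MeasurableSpace Ω} {A : ι → X → Set Ω} {W : Set X} {𝓑 : Set (Set X)}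

theorem exists_countable_measurableSet_biSup {D : Set Ω} (hD : MeasurableSet[⨆ x, m x] D) :
    ∃ Z : Set X, Z.Countable ∧ MeasurableSet[⨆ x ∈ Z, m x] D := by
  rw [MeasurableSpace.measurableSet_iSup] at hD
  induction hD with
  | basic D hD =>
    obtain ⟨x, hx⟩ := hD
    exact ⟨{x}, countable_singleton x, by rwa [iSup_singleton]⟩
  | empty => exact ⟨∅, countable_empty, MeasurableSpace.measurableSet_empty _⟩
  | compl D _ ih =>
    obtain ⟨Z, hZ, hD⟩ := ih
    exact ⟨Z, hZ, hD.compl⟩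
  | iUnion D _ ih =>
    choose Z hZ hD using ih
    exact ⟨⋃ n, Z n, countable_iUnion hZ, .iUnion fun n =>
      biSup_mono (f := m) (fun _ hx => mem_iUnion_of_mem n hx) _ (hD n)⟩

/-- The pairs `(x, C)` of a point and an event such that, for some countable `Z ⊇ W`, the event `C`
is known from the σ-algebras `m z`, `z ∈ Z`, but on `C` these exclude none of the alternatives
`A i x`. -/
def undecidedPairs (m : X → MeasurableSpace Ω) (μ : Measure Ω) (A : ι → X → Set Ω) (W : Set X) :
    Set (X × Set Ω) :=
  {p | ∃ Z : Set X, Z.Countable ∧ W ⊆ Z ∧ MeasurableSet[⨆ z ∈ Z, m z] p.2 ∧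
    ∀ i, IsCondPositiveOn (⨆ z ∈ Z, m z) μ (A i p.1) p.2}

theorem undecidedPairs_antitone : Antitone (undecidedPairs m μ A) :=
  fun _ _ h _ ⟨Z, hZ, hWZ, hp⟩ => ⟨Z, hZ, h.trans hWZ, hp⟩

theorem measurableSet_iSup_of_mem_undecidedPairs {p : X × Set Ω}
    (hp : p ∈ undecidedPairs m μ A W) : MeasurableSet[⨆ x, m x] p.2 := by
  obtain ⟨Z, -, -, hpZ, -⟩ := hp
  exact iSup₂_le_iSup (· ∈ Z) m _ hpZ

theorem measure_inter_inter_ne_zero_of_mem_undecidedPairs {p : X × Set Ω} {D : Set Ω}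
    (hp : p ∈ undecidedPairs m μ A W) (hD : MeasurableSet[⨆ x ∈ W, m x] D)
    (hμ : μ (D ∩ p.2) ≠ 0) (i : ι) : μ (D ∩ (p.2 ∩ A i p.1)) ≠ 0 := by
  obtain ⟨Z, -, hWZ, hpZ, hpos⟩ := hp
  rw [← inter_assoc]
  exact fun h => hμ (hpos i _ inter_subset_right
    ((biSup_mono (f := m) (fun _ hx => hWZ hx) _ hD).inter hpZ) h)

theorem exists_countable_undecidedPairs_recurrent [IsFiniteMeasure μ] (h𝓑 : 𝓑.Countable) :
    ∃ W : Set X, W.Countable ∧ ∀ V ∈ 𝓑, ∀ p ∈ undecidedPairs m μ A W, p.1 ∈ V →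
      ∀ D ⊆ p.2, MeasurableSet D → μ D ≠ 0 → ∀ W' : Set X, W'.Countable →
        ∃ p' ∈ undecidedPairs m μ A W', p'.1 ∈ V ∧ μ (D ∩ p'.2) ≠ 0 := by
  have hrec (V : Set X) := exists_countable_forall_measure_inter_ne_zero (μ := μ)
    (T := fun W => Prod.snd '' {p ∈ undecidedPairs m μ A W | p.1 ∈ V})
    fun _ _ h => image_mono fun p hp => ⟨undecidedPairs_antitone h hp.1, hp.2⟩
  choose W hW hrec using hrec
  refine ⟨⋃ V ∈ 𝓑, W V, h𝓑.biUnion fun V _ => hW V, fun V hV p hp hpV D hDp hD hμD W' hW' => ?_⟩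
  have hpW : p ∈ undecidedPairs m μ A (W V) :=
    undecidedPairs_antitone (subset_biUnion_of_mem hV) hp
  obtain ⟨_, ⟨p', ⟨hp', hp'V⟩, rfl⟩, hμ⟩ :=
    hrec V p.2 (mem_image_of_mem _ ⟨hpW, hpV⟩) D hDp hD hμD W' hW'
  exact ⟨p', hp', hp'V, hμ⟩

theorem exists_countable_cover_of_undecidedPairs_recurrent [IsFiniteMeasure μ]
    (hm : ∀ x, m x ≤ m₀) {i : ι} (hA : ∀ x, MeasurableSet[m x] (A i x)) (hW : W.Countable)
    {V : Set X}
    (hrec : ∀ p ∈ undecidedPairs m μ A W, p.1 ∈ V → ∀ D ⊆ p.2, MeasurableSet D → μ D ≠ 0 →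
      ∀ W' : Set X, W'.Countable →
        ∃ p' ∈ undecidedPairs m μ A W', p'.1 ∈ V ∧ μ (D ∩ p'.2) ≠ 0) :
    ∃ t ⊆ {p ∈ undecidedPairs m μ A W | p.1 ∈ V}, t.Countable ∧
      ∀ p ∈ undecidedPairs m μ A W, p.1 ∈ V → p.2 ≤ᵐ[μ] ⋃ p' ∈ t, p'.2 ∩ A i p'.1 := by
  have htrace : ∀ p ∈ {p ∈ undecidedPairs m μ A W | p.1 ∈ V},
      MeasurableSet[⨆ x, m x] (p.2 ∩ A i p.1) := fun p hp =>
    (measurableSet_iSup_of_mem_undecidedPairs hp.1).inter (le_iSup m p.1 _ (hA p.1))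
  obtain ⟨t, ht, htc, hcover⟩ := exists_countable_subset_ae_le_biUnion (μ := μ)
    fun p hp => (iSup_le hm _ (htrace p hp)).nullMeasurableSet
  refine ⟨t, ht, htc, fun p hp hpV => ae_le_set.2 ?_⟩
  set U := ⋃ p' ∈ t, p'.2 ∩ A i p'.1
  by_contra hμ
  have hD : MeasurableSet[⨆ x, m x] (p.2 \ U) :=
    (measurableSet_iSup_of_mem_undecidedPairs hp).diff
      (.biUnion htc fun p' hp' => htrace p' (ht hp'))
  obtain ⟨Z, hZ, hDZ⟩ := exists_countable_measurableSet_biSup hD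
  obtain ⟨p', hp', hp'V, hμ'⟩ :=
    hrec p hp hpV _ sdiff_subset (iSup_le hm _ hD) hμ (W ∪ Z) (hW.union hZ)
  refine measure_inter_inter_ne_zero_of_mem_undecidedPairs
    (undecidedPairs_antitone subset_union_right hp') hDZ hμ' i (measure_mono_null ?_ <|
      ae_le_set.1 (hcover p' ⟨undecidedPairs_antitone subset_union_left hp', hp'V⟩))
  exact fun ω hω => ⟨hω.2, hω.1.2⟩

theorem frequently_exists_nonempty_forall_exists_mem [IsFiniteMeasure μ] [Countable ι]
    (hm : ∀ x, m x ≤ m₀) (hA : ∀ i x, MeasurableSet[m x] (A i x)) (h𝓑 : 𝓑.Countable)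
    (hundecided : ∀ W : Set X, W.Countable → ∃ p ∈ undecidedPairs m μ A W, μ p.2 ≠ 0) :
    ∃ᶠ ω in ae μ, ∃ F : Set X, F.Nonempty ∧
      ∀ V ∈ 𝓑, (F ∩ V).Nonempty → ∀ i, ∃ y ∈ F ∩ V, ω ∈ A i y := by
  obtain ⟨W, hW, hrec⟩ := exists_countable_undecidedPairs_recurrent (m := m) (μ := μ) (A := A) h𝓑
  obtain ⟨p₀, hp₀, hμp₀⟩ := hundecided W hW
  choose t ht htc hcover using fun (V : 𝓑) i =>
    exists_countable_cover_of_undecidedPairs_recurrent hm (hA i) hW (hrec V V.2)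
  have : Countable 𝓑 := h𝓑.to_subtype
  let T := insert p₀ (⋃ V, ⋃ i, t V i)
  have hTc : T.Countable := .insert _ (countable_iUnion fun V => countable_iUnion (htc V))
  have hTW : T ⊆ undecidedPairs m μ A W :=
    insert_subset hp₀ (iUnion₂_subset fun V i => (ht V i).trans (sep_subset _ _))
  have hae : ∀ᵐ ω ∂μ, ∀ p ∈ T, ∀ (V : 𝓑) i, p.1 ∈ V.1 → ω ∈ p.2 →
      ω ∈ ⋃ p' ∈ t V i, p'.2 ∩ A i p'.1 := by
    simp only [ae_ball_iff hTc, ae_all_iff, eventually_imp_distrib_left]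
    exact fun p hp V i hpV => hcover V i p (hTW hp) hpV
  refine ((frequently_ae_mem_iff.2 hμp₀).and_eventually hae).mono fun ω ⟨hω, hωT⟩ =>
    ⟨{x | ∃ C, (x, C) ∈ T ∧ ω ∈ C}, ⟨p₀.1, p₀.2, mem_insert _ _, hω⟩, ?_⟩
  rintro V hV ⟨x, ⟨C, hC, hωC⟩, hxV⟩ i
  obtain ⟨p, hp, hωp, hωA⟩ := mem_iUnion₂.1 (hωT _ hC ⟨V, hV⟩ i hxV hωC)
  exact ⟨p.1, ⟨⟨p.2, mem_insert_of_mem _ (mem_iUnion₂.2 ⟨_, i, hp⟩), hωp⟩, (ht _ i hp).2⟩, hωA⟩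

end UndecidedPairs

section Separability

theorem countablyGenerated_biSup {m : ι → MeasurableSpace Ω} {I : Set ι} (hI : I.Countable)
    (hm : ∀ i ∈ I, @MeasurableSpace.CountablyGenerated Ω (m i)) :
    @MeasurableSpace.CountablyGenerated Ω (⨆ i ∈ I, m i) := by
  choose! b hb hgen using fun i hi => (hm i hi).isCountablyGenerated
  refine @MeasurableSpace.CountablyGenerated.mk _ (_) ⟨⋃ i ∈ I, b i, hI.biUnion hb, ?_⟩
  rw [biSup_congr hgen]
  simp only [MeasurableSpace.iSup_generateFrom]

theorem isSeparable_measuredSets_of_countablyGenerated {m m₀ : MeasurableSpace Ω}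
    {μ : Measure Ω} [IsFiniteMeasure μ] (hm : m ≤ m₀)
    (hgen : @MeasurableSpace.CountablyGenerated Ω m) :
    TopologicalSpace.IsSeparable {s : MeasuredSets μ | MeasurableSet[m] (s : Set Ω)} := by
  obtain ⟨𝒜, h𝒜, hmeas, happrox⟩ :=
    @exists_countable_measureDense Ω m (μ.trim hm) (@isSeparable_of_sigmaFinite Ω m _ hgen _)
  refine ⟨{s | (s : Set Ω) ∈ 𝒜}, h𝒜.preimage SetLike.coe_injective, fun s hs =>
    Metric.mem_closure_iff.2 fun ε hε => ?_⟩
  obtain ⟨t, ht, hst⟩ := happrox s hs (measure_ne_top _ _) ε hε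
  have htm := hmeas t ht
  rw [trim_measurableSet_eq hm (hs.symmDiff htm)] at hst
  exact ⟨⟨t, hm t htm⟩, ht, (ENNReal.lt_ofReal_iff_toReal_lt (measure_ne_top μ _)).1 hst⟩

theorem exists_countable_iInf_edist_eq_zero {E : Type*} [PseudoEMetricSpace E] {f : X → E}
    (hf : TopologicalSpace.IsSeparable (range f)) :
    ∃ Y : Set X, Y.Countable ∧ ∀ x, ⨅ y ∈ Y, edist (f y) (f x) = 0 := by
  obtain ⟨t, htf, ht, hdense⟩ := hf.exists_countable_dense_subset
  have hsurj : SurjOn f univ t := by rwa [SurjOn, image_univ]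
  obtain ⟨Y, -, hY⟩ := hsurj.exists_bijOn_subset
  refine ⟨Y, countable_of_injective_of_countable_image hY.injOn (hY.image_eq ▸ ht), fun x => ?_⟩
  have hx := Metric.mem_closure_iff_infEDist_zero.1 (hdense (mem_range_self x))
  rw [← hY.image_eq, Metric.infEDist, iInf_image] at hx
  simpa only [edist_comm] using hx

theorem tendsto_measure_preimage_Ioo_nhdsGT [IsFiniteMeasure μ] {g : Ω → ℝ} (hg : Measurable g)
    (q : ℝ) : Tendsto (fun r => μ (g ⁻¹' Ioo q r)) (𝓝[>] q) (𝓝 0) := by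
  have hempty : ⋂ r > q, g ⁻¹' Ioo q r = ∅ := by
    refine eq_empty_of_forall_notMem fun ω hω => ?_
    have hmem := mem_iInter₂.1 hω
    exact lt_irrefl _ (hmem (g ω) (hmem (q + 1) (lt_add_one q)).1).2
  rw [← measure_empty (μ := μ), ← hempty]
  exact tendsto_measure_biInter_gt (fun r _ => (hg measurableSet_Ioo).nullMeasurableSet)
    (fun _ _ _ h => preimage_mono (Ioo_subset_Ioo_right h))
    ⟨q + 1, lt_add_one q, measure_ne_top _ _⟩

end Separability

theorem not_continuousWithinAt_closure_of_forall_exists {Y : Type*} [TopologicalSpace X]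
    [TopologicalSpace Y] [Preorder Y] [OrderClosedTopology Y] {𝓑 : Set (Set X)}
    (h𝓑 : IsTopologicalBasis 𝓑) {g : X → Y} {q r : Y} (hqr : q < r) {F : Set X}
    (hq : ∀ V ∈ 𝓑, (F ∩ V).Nonempty → ∃ y ∈ F ∩ V, g y ≤ q)
    (hr : ∀ V ∈ 𝓑, (F ∩ V).Nonempty → ∃ y ∈ F ∩ V, r ≤ g y) {x : X} (hx : x ∈ closure F) :
    ¬ContinuousWithinAt g (closure F) x := by
  intro hcont
  have hfreq {p : X → Prop} (hp : ∀ V ∈ 𝓑, (F ∩ V).Nonempty → ∃ y ∈ F ∩ V, p y) :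
      ∃ᶠ y in 𝓝[closure F] x, p y := by
    refine (nhdsWithin_hasBasis h𝓑.nhds_hasBasis _).frequently_iff.2 fun {V} ⟨hV, hxV⟩ => ?_
    obtain ⟨y, ⟨hyF, hyV⟩, hpy⟩ :=
      hp V hV (inter_comm V F ▸ mem_closure_iff.1 hx V (h𝓑.isOpen hV) hxV)
    exact ⟨y, ⟨hyV, subset_closure hyF⟩, hpy⟩
  exact hqr.not_ge ((ge_of_tendsto_of_frequently hcont (hfreq hr)).trans
    (le_of_tendsto_of_frequently hcont (hfreq hq)))

section LevelSets

variable [TopologicalSpace X] [SecondCountableTopology X] [IsFiniteMeasure μ] {f : X → Ω → ℝ}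

theorem exists_countable_forall_undecidedPairs_null (hf : ∀ x, Measurable (f x))
    (hpc : ∀ᵐ ω ∂μ, ∀ F : Set X, IsClosed F → F.Nonempty →
      ∃ x ∈ F, ContinuousWithinAt (fun x => f x ω) F x) {q r : ℝ} (hqr : q < r) :
    ∃ Z : Set X, Z.Countable ∧ ∀ p ∈ undecidedPairs
      (fun x => MeasurableSpace.comap (f x) inferInstance) μ
      (fun (b : Bool) x => bif b then {ω | f x ω ≤ q} else {ω | r ≤ f x ω}) Z, μ p.2 = 0 := by
  by_contra! hundecided
  obtain ⟨ω, ⟨F, hF, hosc⟩, hω⟩ := (frequently_exists_nonempty_forall_exists_mem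
    (fun x => (hf x).comap_le)
    (by
      rintro (_ | _) x
      exacts [⟨Ici r, measurableSet_Ici, rfl⟩, ⟨Iic q, measurableSet_Iic, rfl⟩])
    (countable_countableBasis X) hundecided).and_eventually hpc |>.exists
  obtain ⟨x, hx, hcont⟩ := hω (closure F) isClosed_closure hF.closure
  exact not_continuousWithinAt_closure_of_forall_exists (isBasis_countableBasis X) hqr
    (fun V hV hFV => hosc V hV hFV true) (fun V hV hFV => hosc V hV hFV false) hx hcont

theorem exists_countable_forall_measure_symmDiff_le (hf : ∀ x, Measurable (f x))
    (hpc : ∀ᵐ ω ∂μ, ∀ F : Set X, IsClosed F → F.Nonempty →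
      ∃ x ∈ F, ContinuousWithinAt (fun x => f x ω) F x) {q r : ℝ} (hqr : q < r) :
    ∃ Z : Set X, Z.Countable ∧ ∀ x, ∃ D,
      MeasurableSet[⨆ z ∈ Z, MeasurableSpace.comap (f z) inferInstance] D ∧
        μ ({ω | f x ω ≤ q} ∆ D) ≤ μ (f x ⁻¹' Ioo q r) := by
  obtain ⟨Z, hZ, hnull⟩ := exists_countable_forall_undecidedPairs_null hf hpc hqr
  refine ⟨Z, hZ, fun x => ?_⟩
  obtain ⟨D, hD, hle⟩ := exists_measurableSet_measure_symmDiff_le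
    (A := {ω | f x ω ≤ q}) (B := {ω | r ≤ f x ω}) (iSup₂_le fun z _ => (hf z).comap_le)
    fun C hC hCA hCB => hnull (x, C) ⟨Z, hZ, subset_rfl, hC, Bool.forall_bool.2 ⟨hCB, hCA⟩⟩
  refine ⟨D, hD, hle.trans_eq (congrArg μ ?_)⟩
  ext ω
  simp

theorem exists_countable_approx_for_level_sets_general (hf : ∀ x, Measurable (f x))
    (hpc : ∀ᵐ ω ∂μ, ∀ F : Set X, IsClosed F → F.Nonempty →
      ∃ x ∈ F, ContinuousWithinAt (fun x => f x ω) F x) (q : ℝ) :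
    ∃ Y : Set X, Y.Countable ∧
      ∀ x, ⨅ y ∈ Y, μ ({ω | f y ω ≤ q} ∆ {ω | f x ω ≤ q}) = 0 := by
  obtain ⟨r, -, hqr, hr⟩ := exists_seq_strictAnti_tendsto q
  choose Z hZ hZD using fun n => exists_countable_forall_measure_symmDiff_le hf hpc (hqr n)
  let level (x : X) : MeasuredSets μ := ⟨{ω | f x ω ≤ q}, hf x measurableSet_Iic⟩
  have hle (n : ℕ) : ⨆ z ∈ Z n, MeasurableSpace.comap (f z) inferInstance ≤ m₀ :=
    iSup₂_le fun z _ => (hf z).comap_le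
  suffices hsep : TopologicalSpace.IsSeparable (range level) from
    exists_countable_iInf_edist_eq_zero hsep
  have hsep (n : ℕ) := isSeparable_measuredSets_of_countablyGenerated (μ := μ) (hle n)
    (countablyGenerated_biSup (hZ n) fun z _ => .comap (f z))
  refine (TopologicalSpace.IsSeparable.iUnion hsep).closure.mono ?_
  rintro _ ⟨x, rfl⟩
  choose D hD hDle using fun n => hZD n x
  let approx (n : ℕ) : MeasuredSets μ := ⟨D n, hle n _ (hD n)⟩
  suffices happrox : Tendsto approx atTop (𝓝 (level x)) from
    mem_closure_of_tendsto happrox (.of_forall fun n => mem_iUnion_of_mem n (hD n))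
  have hgap : Tendsto (fun n => μ (f x ⁻¹' Ioo q (r n))) atTop (𝓝 0) :=
    (tendsto_measure_preimage_Ioo_nhdsGT (hf x) q).comp
      (tendsto_nhdsWithin_iff.2 ⟨hr, .of_forall hqr⟩)
  exact tendsto_iff_edist_tendsto_0.2 (tendsto_of_tendsto_of_tendsto_of_le_of_le
    tendsto_const_nhds hgap (fun _ => zero_le) fun n => (edist_comm _ _).trans_le (hDle n))

end LevelSets

end RandomFunctions

theorem exists_countable_approx_for_level_sets
    {X : Type*} [TopologicalSpace X] [TopologicalSpace.SeparableSpace X]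
    [TopologicalSpace.MetrizableSpace X]
    (K : Set (X → ℝ)) (hK : IsCompact K)
    (hpc : ∀ g ∈ K, ∀ F : Set X, IsClosed F → F.Nonempty →
      ∃ x ∈ F, ContinuousWithinAt g F x)
    [MeasurableSpace K] [BorelSpace K]
    (μ : Measure K) [IsProbabilityMeasure μ] [μ.Regular]
    (q : ℝ) :
    ∃ Xq : Set X, Xq.Countable ∧ ∀ x : X,
      (⨅ y ∈ Xq,
        μ (symmDiff {g : K | g.val y ≤ q} {g : K | g.val x ≤ q})) = 0 := by
  let _ := metrizableSpaceMetric X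
  have := UniformSpace.secondCountable_of_separable X
  exact exists_countable_approx_for_level_sets_general (f := fun x (g : K) => g.val x)
    (fun x => ((continuous_apply x).comp continuous_subtype_val).measurable)
    (.of_forall fun g => hpc g.1 g.2) q
end

section
/- Let H be the Helly space. For every set E ⊆ [0,1] there exists a countable set F ⊆ E such that for every g ∈ H and every closed interval I ⊆ ℝ, g[E] ⊆ I if and only if g[F] ⊆ I. Consequently, for every closed interval I ⊆ ℝ and every E ⊆ [0,1], the set A(I,E) = {g ∈ H : g[E] ⊆ I} is a closed G_δ subset of H. -/
open Set

/-- The Helly space: all nondecreasing functions from `[0,1]` to `[0,1]`, viewed as a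
subspace of `ℝ^[0,1]` with the topology of pointwise convergence. -/
def Helly : Set (↥unitInterval → ℝ) :=
  {f | Monotone f ∧ ∀ x, f x ∈ Set.Icc (0 : ℝ) 1}

/-!
A monotone map sends the order-convex hull of a set `F` into every order-convex set that contains
the image of `F`. A separable subspace `E` of a linear order lies in the order-convex hull of a
countable `F ⊆ E`: take a countable dense subset and add the least and greatest elements of `E`,
if they exist. So the condition that `g` maps `E` into `I` involves only the countably many
continuous evaluations at the points of `F`.
-/

theorem exists_countable_subset_upperClosure_inter_lowerClosure {α : Type*} [LinearOrder α]
    [TopologicalSpace α] [OrderClosedTopology α] (E : Set α) [TopologicalSpace.SeparableSpace E] :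
    ∃ F ⊆ E, F.Countable ∧ E ⊆ ↑(upperClosure F) ∩ ↑(lowerClosure F) := by
  obtain ⟨D, hD_countable, hD_dense, hD_bot, hD_top⟩ := exists_countable_dense_bot_top E
  refine ⟨Subtype.val '' D, Subtype.coe_image_subset E D, hD_countable.image _,
    fun x hx => ⟨?_, ?_⟩⟩
  · obtain ⟨y, hyD, hyx⟩ := hD_dense.exists_le' hD_bot ⟨x, hx⟩
    exact mem_upperClosure.2 ⟨y, mem_image_of_mem _ hyD, hyx⟩
  · obtain ⟨z, hzD, hxz⟩ := hD_dense.exists_ge' hD_top ⟨x, hx⟩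
    exact mem_lowerClosure.2 ⟨z, mem_image_of_mem _ hzD, hxz⟩

theorem mapsTo_iff_of_subset_upperClosure_inter_lowerClosure {α β : Type*} [Preorder α]
    [Preorder β] {f : α → β} {E F : Set α} {I : Set β} (hf : MonotoneOn f E) (hFE : F ⊆ E)
    (hEF : E ⊆ ↑(upperClosure F) ∩ ↑(lowerClosure F)) (hI : I.OrdConnected) :
    MapsTo f E I ↔ MapsTo f F I := by
  refine ⟨fun h => h.mono_left hFE, fun h x hx => ?_⟩
  obtain ⟨⟨y, hyF, hyx⟩, ⟨z, hzF, hxz⟩⟩ := hEF hx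
  exact hI.out (h hyF) (h hzF) ⟨hf (hFE hyF) hx hyx, hf hx (hFE hzF) hxz⟩

theorem isGδ_setOfPred_mapsTo {ι X Y : Type*} [TopologicalSpace X] [TopologicalSpace Y]
    {f : X → ι → Y} {s : Set ι} {t : Set Y} (hs : s.Countable) (ht : IsGδ t)
    (hf : ∀ i ∈ s, Continuous fun x => f x i) : IsGδ {x | MapsTo (f x) s t} := by
  simp only [MapsTo, ofPred_forall]
  exact IsGδ.biInter hs fun i hi => ht.preimage (hf i hi)

theorem helly_A_closed_Gdelta_general {α β : Type*} [LinearOrder α] [TopologicalSpace α]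
    [OrderClosedTopology α] [Preorder β] [TopologicalSpace β] (E : Set α)
    [TopologicalSpace.SeparableSpace E] {H : Set (α → β)} (hH : ∀ g ∈ H, MonotoneOn g E) :
    (∃ F ⊆ E, F.Countable ∧ ∀ g ∈ H, ∀ I : Set β, I.OrdConnected →
      (MapsTo g E I ↔ MapsTo g F I)) ∧
    ∀ I : Set β, (IsClosed I → IsClosed {g : H | MapsTo g.val E I}) ∧
      (I.OrdConnected → IsGδ I → IsGδ {g : H | MapsTo g.val E I}) := by
  obtain ⟨F, hFE, hF_countable, hEF⟩ :=
    exists_countable_subset_upperClosure_inter_lowerClosure E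
  have mapsTo_iff : ∀ g ∈ H, ∀ I : Set β, I.OrdConnected → (MapsTo g E I ↔ MapsTo g F I) :=
    fun g hg _ => mapsTo_iff_of_subset_upperClosure_inter_lowerClosure (hH g hg) hFE hEF
  have continuous_eval (x : α) : Continuous fun g : H => g.val x :=
    (continuous_apply x).comp continuous_subtype_val
  refine ⟨⟨F, hFE, hF_countable, mapsTo_iff⟩, fun I => ⟨fun hI => ?_, fun hI hI_Gδ => ?_⟩⟩
  · exact hI.setOfPred_mapsTo fun x _ => continuous_eval x
  · simp only [fun g : H => mapsTo_iff g g.2 I hI]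
    exact isGδ_setOfPred_mapsTo hF_countable hI_Gδ fun x _ => continuous_eval x

theorem helly_A_closed_Gdelta (E : Set ↥unitInterval) :
    (∃ F ⊆ E, F.Countable ∧ ∀ g ∈ Helly, ∀ a b : ℝ,
        ((∀ x ∈ E, g x ∈ Set.Icc a b) ↔ ∀ x ∈ F, g x ∈ Set.Icc a b)) ∧
    ∀ a b : ℝ,
      IsClosed {g : Helly | ∀ x ∈ E, g.val x ∈ Set.Icc a b} ∧
      IsGδ {g : Helly | ∀ x ∈ E, g.val x ∈ Set.Icc a b} := by
  obtain ⟨⟨F, hFE, hF_countable, hF⟩, hA⟩ :=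
    helly_A_closed_Gdelta_general E (H := Helly) fun _ hg => hg.1.monotoneOn E
  exact ⟨⟨F, hFE, hF_countable, fun g hg a b => hF g hg _ ordConnected_Icc⟩, fun a b =>
    ⟨(hA _).1 isClosed_Icc, (hA _).2 ordConnected_Icc isClosed_Icc.isGδ⟩⟩
end

section
/- Every Radon probability measure on the Helly space H is strongly countably determined. -/
open MeasureTheory Set

/-- A (Radon probability) measure `μ` on a topological space is *strongly countably
determined* if there is a countable family `𝓕` of closed `Gδ` sets such that
`μ U = sup {μ F : F ∈ 𝓕, F ⊆ U}` for every open set `U`. -/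
def StronglyCountablyDetermined {K : Type*} [TopologicalSpace K] [MeasurableSpace K]
    (μ : Measure K) : Prop :=
  ∃ 𝓕 : Set (Set K), 𝓕.Countable ∧ (∀ F ∈ 𝓕, IsClosed F ∧ IsGδ F) ∧
    ∀ U : Set K, IsOpen U → μ U = ⨆ (F : Set K) (_ : F ∈ 𝓕) (_ : F ⊆ U), μ F

/-!
A compact-regular measure on `K` is strongly countably determined once countably many closed `Gδ`
sets exhaust each member of a *subbasis* up to null sets: finite intersections pass from the
subbasis to a basis, compact regularity from a basis to all open sets (a set that is locally null
is null), and finite unions turn covers into suprema.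

For a space of monotone functions the subbasis consists of the sets `{x | a < φ x t}` and their
order duals. For fixed `q`, the sets `{x | q ≤ φ x t}` increase with `t`, so their measures
have only countably many discontinuities in `t`; up to null sets they are thus recovered from
countably many `t`.
-/

open Filter Topology TopologicalSpace

section Measure

variable {Ω : Type*} [MeasurableSpace Ω] {μ : Measure Ω}

lemma measure_sUnion_eq_iSup_finite {𝓕 : Set (Set Ω)} (h𝓕 : 𝓕.Countable) :
    μ (⋃₀ 𝓕) = ⨆ T ∈ {T : Set (Set Ω) | T.Finite ∧ T ⊆ 𝓕}, μ (⋃₀ T) := by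
  have hunion : ⋃₀ 𝓕 = ⋃ T ∈ {T : Set (Set Ω) | T.Finite ∧ T ⊆ 𝓕}, ⋃₀ T := by
    refine subset_antisymm ?_ (iUnion₂_subset fun T hT => sUnion_subset_sUnion hT.2)
    rintro x ⟨F, hF, hxF⟩
    exact mem_biUnion (x := {F}) ⟨finite_singleton F, singleton_subset_iff.2 hF⟩ ⟨F, rfl, hxF⟩
  rw [hunion]
  refine measure_biUnion_eq_iSup (countable_ofPred_finite_subset h𝓕) ?_
  exact fun S hS T hT => ⟨S ∪ T, ⟨hS.1.union hT.1, union_subset hS.2 hT.2⟩,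
    sUnion_subset_sUnion subset_union_left, sUnion_subset_sUnion subset_union_right⟩

/-- Almost every point of `U` lies in a member of `𝓕` contained in `U`. For countable `𝓕` this
says that `U` is, up to a null set, the union of the members of `𝓕` inside it. -/
def AEExhausts (μ : Measure Ω) (𝓕 : Set (Set Ω)) (U : Set Ω) : Prop :=
  ∀ᵐ x ∂μ, x ∈ U → ∃ F ∈ 𝓕, F ⊆ U ∧ x ∈ F

namespace AEExhausts

variable {𝓕 𝓖 : Set (Set Ω)} {U : Set Ω}

lemma mono (h : AEExhausts μ 𝓕 U) (h𝓕𝓖 : 𝓕 ⊆ 𝓖) : AEExhausts μ 𝓖 U := by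
  filter_upwards [h] with x hx hxU
  obtain ⟨F, hF, hFU, hxF⟩ := hx hxU
  exact ⟨F, h𝓕𝓖 hF, hFU, hxF⟩

lemma sInter {T : Set (Set Ω)} (hT : T.Finite) (h : ∀ U ∈ T, AEExhausts μ 𝓕 U) :
    AEExhausts μ (Set.sInter '' {S | S.Finite ∧ S ⊆ 𝓕}) (⋂₀ T) := by
  filter_upwards [(ae_ball_iff hT.countable).2 h] with x hx hxT
  choose! F hF hFU hxF using fun U hU => hx U hU (hxT U hU)
  refine ⟨_, ⟨F '' T, ⟨hT.image F, image_subset_iff.2 hF⟩, rfl⟩, ?_, ?_⟩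
  · exact subset_sInter fun U hU => (sInter_subset_of_mem (mem_image_of_mem F hU)).trans (hFU U hU)
  · exact forall_mem_image.2 hxF

lemma measure_le (h : AEExhausts μ 𝓕 U) : μ U ≤ μ (⋃₀ {F ∈ 𝓕 | F ⊆ U}) := by
  refine measure_mono_ae ?_
  filter_upwards [h] with x hx hxU
  obtain ⟨F, hF, hFU, hxF⟩ := hx hxU
  exact ⟨F, ⟨hF, hFU⟩, hxF⟩

lemma of_isTopologicalBasis [TopologicalSpace Ω] [OpensMeasurableSpace Ω] [IsFiniteMeasure μ]
    [μ.InnerRegularCompactLTTop] {𝓑 : Set (Set Ω)} (h𝓑 : IsTopologicalBasis 𝓑)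
    (h𝓕 : 𝓕.Countable) (h𝓕_meas : ∀ F ∈ 𝓕, MeasurableSet F) (h : ∀ B ∈ 𝓑, AEExhausts μ 𝓕 B)
    (hU : IsOpen U) : AEExhausts μ 𝓕 U := by
  let W := ⋃₀ {F ∈ 𝓕 | F ⊆ U}
  have hW : MeasurableSet W := .sUnion (h𝓕.mono (sep_subset _ _)) fun F hF => h𝓕_meas F hF.1
  have hcompact_null : ∀ C ⊆ U \ W, IsCompact C → μ C = 0 := by
    refine fun C hC hC_compact => hC_compact.measure_zero_of_nhdsWithin fun x hx => ?_
    obtain ⟨B, hB, hxB, hBU⟩ := h𝓑.exists_subset_of_mem_open (hC hx).1 hU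
    refine ⟨B ∩ C, inter_mem (mem_nhdsWithin_of_mem_nhds ((h𝓑.isOpen hB).mem_nhds hxB))
      self_mem_nhdsWithin, ?_⟩
    refine measure_mono_null ?_ (ae_iff.1 (h B hB))
    rintro y ⟨hyB, hyC⟩ hy
    obtain ⟨F, hF, hFB, hyF⟩ := hy hyB
    exact (hC hyC).2 ⟨F, ⟨hF, hFB.trans hBU⟩, hyF⟩
  have hnull : μ (U \ W) = 0 := by
    rw [(hU.measurableSet.diff hW).measure_eq_iSup_isCompact_of_ne_top (measure_ne_top _ _)]
    simpa only [ENNReal.iSup_eq_zero] using hcompact_null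
  filter_upwards [measure_eq_zero_iff_ae_notMem.1 hnull] with x hx hxU
  obtain ⟨F, ⟨hF, hFU⟩, hxF⟩ := not_not.1 fun hxW => hx ⟨hxU, hxW⟩
  exact ⟨F, hF, hFU, hxF⟩

end AEExhausts

end Measure

section Criteria

variable {K : Type*} [TopologicalSpace K] [MeasurableSpace K] {μ : Measure K}

lemma stronglyCountablyDetermined_of_aeExhausts {𝓕 : Set (Set K)} (h𝓕 : 𝓕.Countable)
    (h𝓕_closed : ∀ F ∈ 𝓕, IsClosed F ∧ IsGδ F) (h : ∀ U, IsOpen U → AEExhausts μ 𝓕 U) :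
    StronglyCountablyDetermined μ := by
  refine ⟨sUnion '' {T | T.Finite ∧ T ⊆ 𝓕}, (countable_ofPred_finite_subset h𝓕).image _, ?_,
    fun U hU => le_antisymm ?_ (iSup₂_le fun F _ => iSup_le measure_mono)⟩
  · rintro _ ⟨T, ⟨hT, hT𝓕⟩, rfl⟩
    exact ⟨sUnion_eq_biUnion ▸ hT.isClosed_biUnion fun F hF => (h𝓕_closed F (hT𝓕 hF)).1,
      .sUnion hT fun F hF => (h𝓕_closed F (hT𝓕 hF)).2⟩
  · have hμU : μ U ≤ ⨆ T ∈ {T | T.Finite ∧ T ⊆ {F ∈ 𝓕 | F ⊆ U}}, μ (⋃₀ T) :=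
      (h U hU).measure_le.trans_eq (measure_sUnion_eq_iSup_finite (h𝓕.mono (sep_subset _ _)))
    refine hμU.trans (iSup₂_le fun T ⟨hT, hT𝓕U⟩ => ?_)
    exact le_iSup₂_of_le (⋃₀ T) ⟨T, ⟨hT, fun F hF => (hT𝓕U hF).1⟩, rfl⟩
      (le_iSup_of_le (sUnion_subset fun F hF => (hT𝓕U hF).2) le_rfl)

lemma stronglyCountablyDetermined_of_subbasis [OpensMeasurableSpace K] [IsFiniteMeasure μ]
    [μ.InnerRegularCompactLTTop] {𝓢 𝓕 : Set (Set K)}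
    (h𝓢 : ‹TopologicalSpace K› = generateFrom 𝓢) (h𝓕 : 𝓕.Countable)
    (h𝓕_closed : ∀ F ∈ 𝓕, IsClosed F ∧ IsGδ F) (h : ∀ U ∈ 𝓢, AEExhausts μ 𝓕 U) :
    StronglyCountablyDetermined μ := by
  have hcountable : (Set.sInter '' {S | S.Finite ∧ S ⊆ 𝓕}).Countable :=
    (countable_ofPred_finite_subset h𝓕).image _
  have hclosed : ∀ F ∈ Set.sInter '' {S | S.Finite ∧ S ⊆ 𝓕}, IsClosed F ∧ IsGδ F := by
    rintro _ ⟨S, ⟨hS, hS𝓕⟩, rfl⟩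
    exact ⟨isClosed_sInter fun F hF => (h𝓕_closed F (hS𝓕 hF)).1,
      .sInter (fun F hF => (h𝓕_closed F (hS𝓕 hF)).2) hS.countable⟩
  refine stronglyCountablyDetermined_of_aeExhausts hcountable hclosed fun U hU => ?_
  refine .of_isTopologicalBasis (isTopologicalBasis_of_subbasis h𝓢) hcountable
    (fun F hF => (hclosed F hF).1.measurableSet) ?_ hU
  rintro _ ⟨T, ⟨hT, hT𝓢⟩, rfl⟩
  exact .sInter hT fun V hV => h V (hT𝓢 hV)

end Criteria

lemma eq_generateFrom_of_isInducing_pi {ι K β : Type*} [TopologicalSpace K] [LinearOrder β]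
    [TopologicalSpace β] [OrderTopology β] {φ : K → ι → β} (hφ : IsInducing φ) :
    ‹TopologicalSpace K› =
      generateFrom (⋃ t, {U | ∃ a, U = {x | a < φ x t} ∨ U = {x | φ x t < a}}) := by
  rw [hφ.eq_induced, Pi.topologicalSpace, induced_iInf, generateFrom_iUnion]
  refine iInf_congr fun t => ?_
  rw [induced_compose, ‹OrderTopology β›.topology_eq_generate_intervals]
  refine induced_generateFrom_eq.trans ?_
  congr 1
  ext U
  constructor
  · rintro ⟨_, ⟨a, rfl | rfl⟩, rfl⟩
    exacts [⟨a, Or.inl rfl⟩, ⟨a, Or.inr rfl⟩]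
  · rintro ⟨a, rfl | rfl⟩
    exacts [⟨_, ⟨a, Or.inl rfl⟩, rfl⟩, ⟨_, ⟨a, Or.inr rfl⟩, rfl⟩]

section LinearOrder

variable {α β : Type*} [LinearOrder α] [TopologicalSpace α] [OrderTopology α]
  [SecondCountableTopology α] [LinearOrder β] [TopologicalSpace β] [OrderTopology β]
  [SecondCountableTopology β]

variable (α) in
lemma exists_countable_frequently_nhdsLE :
    ∃ D : Set α, D.Countable ∧ ∀ t, ∃ᶠ d in 𝓝[≤] t, d ∈ D := by
  obtain ⟨D, hD, hD_dense, hD_bot, -⟩ := exists_countable_dense_bot_top α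
  refine ⟨D ∪ {t | ∃ s, s ⋖ t}, hD.union countable_setOfPred_covBy_left, fun t => ?_⟩
  by_cases ht : t ∈ D ∪ {t | ∃ s, s ⋖ t}
  · exact (frequently_pure.2 ht).filter_mono (pure_le_nhdsWithin self_mem_Iic)
  obtain ⟨ht_dense, ht_covBy⟩ := not_or.1 ht
  obtain ⟨b, hb⟩ : ∃ b, b < t := by
    simpa only [IsBot, not_forall, not_le] using mt (hD_bot t) ht_dense
  refine frequently_iff.2 fun {u} hu => ?_
  obtain ⟨l, hl, hlu⟩ := (mem_nhdsLE_iff_exists_Ioc_subset' hb).1 hu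
  obtain ⟨c, hlc, hct⟩ := (not_covBy_iff hl).1 fun h => ht_covBy ⟨l, h⟩
  obtain ⟨d, hd, hld, hdt⟩ := hD_dense.exists_mem_open isOpen_Ioo ⟨c, hlc, hct⟩
  exact ⟨d, hlu ⟨hld, hdt.le⟩, Or.inl hd⟩

lemma exists_countable_ae_mem_of_monotone {Ω : Type*} [MeasurableSpace Ω] (μ : Measure Ω)
    [IsFiniteMeasure μ] {E : α → Set Ω} (hE : Monotone E) (hE_meas : ∀ t, MeasurableSet (E t)) :
    ∃ D : Set α, D.Countable ∧ ∀ t, ∀ᵐ x ∂μ, x ∈ E t → ∃ d ∈ D, d ≤ t ∧ x ∈ E d := by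
  obtain ⟨D, hD, hD_freq⟩ := exists_countable_frequently_nhdsLE α
  have hμE : Monotone fun t => μ (E t) := fun s t hst => measure_mono (hE hst)
  let J := {t | ¬ContinuousAt (fun t => μ (E t)) t}
  have hDJ : (D ∪ J).Countable := hD.union hμE.countable_not_continuousAt
  refine ⟨D ∪ J, hDJ, fun t => ?_⟩
  by_cases ht : t ∈ J
  · exact .of_forall fun x hx => ⟨t, Or.inr ht, le_rfl, hx⟩
  let V := ⋃ d ∈ (D ∪ J) ∩ Iic t, E d
  have hV : MeasurableSet V := .biUnion (hDJ.mono inter_subset_left) fun d _ => hE_meas d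
  have hVE : V ⊆ E t := iUnion₂_subset fun d hd => hE hd.2
  have hμV : μ (E t) ≤ μ V := by
    refine le_of_forall_lt fun c hc => ?_
    have hcont : ContinuousWithinAt (fun t => μ (E t)) (Iic t) t :=
      (not_not.1 ht).continuousWithinAt
    obtain ⟨d, hd, hcd, hdt⟩ := ((hD_freq t).and_eventually
      ((hcont.eventually (lt_mem_nhds hc)).and self_mem_nhdsWithin)).exists
    exact hcd.trans_le (measure_mono (subset_biUnion_of_mem (u := E) ⟨Or.inl hd, hdt⟩))
  have hVE_ae : V =ᵐ[μ] E t :=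
    ae_eq_of_subset_of_measure_ge hVE hμV hV.nullMeasurableSet (measure_ne_top _ _)
  filter_upwards [hVE_ae.mem_iff] with x hx hxE
  obtain ⟨d, ⟨hdD, hdt⟩, hxd⟩ := mem_iUnion₂.1 (hx.2 hxE)
  exact ⟨d, hdD, hdt, hxd⟩

section MonotoneFamily

variable {K : Type*} [TopologicalSpace K] {φ : K → α → β}

lemma exists_countable_aeExhausts_setOf_lt [MeasurableSpace K] [OpensMeasurableSpace K]
    (μ : Measure K) [IsFiniteMeasure μ] (hφ_cont : Continuous φ) (hφ_mono : ∀ x, Monotone (φ x)) :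
    ∃ 𝓕 : Set (Set K), 𝓕.Countable ∧ (∀ F ∈ 𝓕, IsClosed F ∧ IsGδ F) ∧
      ∀ t a, AEExhausts μ 𝓕 {x | a < φ x t} := by
  have hφ_eval (t : α) : Continuous fun x => φ x t := (continuous_apply t).comp hφ_cont
  let E (q : β) (t : α) : Set K := {x | q ≤ φ x t}
  have hE_closed (q : β) (t : α) : IsClosed (E q t) := isClosed_Ici.preimage (hφ_eval t)
  obtain ⟨Q, hQ, hQ_freq⟩ := exists_countable_frequently_nhdsLE β
  choose D hD hED using fun q : β => exists_countable_ae_mem_of_monotone μ (E := E q)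
    (fun s t hst x hx => le_trans hx (hφ_mono x hst)) fun t => (hE_closed q t).measurableSet
  refine ⟨⋃ q ∈ Q, E q '' D q, hQ.biUnion fun q _ => (hD q).image _, ?_, fun t a => ?_⟩
  · simp only [mem_iUnion₂]
    rintro _ ⟨q, -, d, -, rfl⟩
    exact ⟨hE_closed q d, isClosed_Ici.isGδ.preimage (hφ_eval d)⟩
  · filter_upwards [(ae_ball_iff hQ).2 fun q _ => hED q t] with x hx hax
    obtain ⟨q, hqQ, haq, hqx⟩ := ((hQ_freq (φ x t)).and_eventually
      ((eventually_nhdsWithin_of_eventually_nhds (lt_mem_nhds hax)).and self_mem_nhdsWithin)).exists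
    obtain ⟨d, hdD, hdt, hxd⟩ := hx q hqQ hqx
    exact ⟨E q d, mem_biUnion hqQ (mem_image_of_mem _ hdD),
      fun y hy => haq.trans_le (le_trans hy (hφ_mono y hdt)), hxd⟩

theorem helly_stronglyCountablyDetermined_general [MeasurableSpace K] [OpensMeasurableSpace K]
    (hφ : IsInducing φ) (hφ_mono : ∀ x, Monotone (φ x)) (μ : Measure K) [IsFiniteMeasure μ]
    [μ.InnerRegularCompactLTTop] : StronglyCountablyDetermined μ := by
  obtain ⟨𝓕, h𝓕, h𝓕_closed, h𝓕_lt⟩ :=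
    exists_countable_aeExhausts_setOf_lt μ hφ.continuous hφ_mono
  obtain ⟨𝓖, h𝓖, h𝓖_closed, h𝓖_gt⟩ :=
    exists_countable_aeExhausts_setOf_lt (α := αᵒᵈ) (β := βᵒᵈ) μ hφ.continuous
      fun x => (hφ_mono x).dual
  refine stronglyCountablyDetermined_of_subbasis (eq_generateFrom_of_isInducing_pi hφ)
    (h𝓕.union h𝓖) (fun F hF => hF.elim (h𝓕_closed F) (h𝓖_closed F)) fun U hU => ?_
  obtain ⟨t, a, rfl | rfl⟩ := mem_iUnion.1 hU
  exacts [(h𝓕_lt t a).mono subset_union_left, (h𝓖_gt t a).mono subset_union_right]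

end MonotoneFamily

end LinearOrder

theorem helly_stronglyCountablyDetermined
    [MeasurableSpace ↥Helly] [BorelSpace ↥Helly]
    (μ : Measure ↥Helly) [IsProbabilityMeasure μ] [μ.Regular] :
    StronglyCountablyDetermined μ :=
  helly_stronglyCountablyDetermined_general IsInducing.subtypeVal (fun f => f.2.1) μ
end

section
/- Let λ be the standard product probability measure on 2^{ω₁} and let B be a Baire measurable subset of 2^{ω₁}. If (J_n)_{n∈ω} is a sequence of pairwise disjoint finite subsets of ω₁ and k ∈ ω is such that |J_n| ≤ k for every n, then lim_n λ(S_{J_n}(B)) = λ(B). -/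
open MeasureTheory Set

/-- For `J ⊆ ι` and `B ⊆ 2^ι`, the set
`S_J(B) = 2^ι \ π_{ι∖J}⁻¹[π_{ι∖J}[2^ι \ B]]`, i.e. the set of all `x` such that every
`y` agreeing with `x` outside `J` belongs to `B`. -/
def SJ {ι : Type*} (J : Set ι) (B : Set (ι → Bool)) : Set (ι → Bool) :=
  {x | ∀ y : ι → Bool, (∀ i, i ∉ J → y i = x i) → y ∈ B}

/-!
By the description `S_J(B) = ⋂_{I ⊆ J} (χ_I ⊕ B)`, the measure of `B \ S_J(B)` is at most the sum
over the `2 ^ |J|` sets `I ⊆ J` of the measure of `B \ (χ_I ⊕ B)`. If `C` is a set that depends only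
on coordinates outside `J`, then `χ_I ⊕ C = C`, and since `λ` is invariant under `χ_I ⊕ ·`, each
summand is at most `λ(B ∆ C)`. A cylinder `C` over finitely many coordinates makes `λ(B ∆ C)` as
small as desired; all but finitely many of the disjoint sets `J_n` avoid its coordinates, and the
factor `2 ^ |J_n|` stays bounded.
-/

open Filter Topology
open scoped ENNReal Function symmDiff

section PiMeasure

variable {ι : Type*} {α : ι → Type*} [∀ i, MeasurableSpace (α i)]

lemma measure_pi_ext_of_forall_mem_eq [∀ i, Countable (α i)] [∀ i, MeasurableSingletonClass (α i)]
    {μ ν : Measure (∀ i, α i)} [IsFiniteMeasure μ]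
    (h : ∀ (I : Finset ι) (φ : ∀ i, α i), μ {x | ∀ i ∈ I, x i = φ i} = ν {x | ∀ i ∈ I, x i = φ i}) :
    μ = ν := by
  have map_restrict_eq (I : Finset ι) : ν.map I.restrict = μ.map I.restrict := by
    refine Measure.ext_of_singleton fun ψ => ?_
    rw [Measure.map_apply I.measurable_restrict (measurableSet_singleton ψ),
      Measure.map_apply I.measurable_restrict (measurableSet_singleton ψ)]
    obtain hψ | ⟨φ, rfl⟩ := (I.restrict ⁻¹' {ψ}).eq_empty_or_nonempty
    · simp only [hψ, measure_empty]
    · have fiber_eq : I.restrict ⁻¹' {I.restrict φ} = {x | ∀ i ∈ I, x i = φ i} := by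
        ext x
        simp [funext_iff]
      rw [fiber_eq, h]
  exact IsProjectiveLimit.unique (P := fun I => μ.map I.restrict) (fun _ => rfl) map_restrict_eq

lemma exists_measure_symmDiff_cylinder_lt (μ : Measure (∀ i, α i)) [IsFiniteMeasure μ]
    {B : Set (∀ i, α i)} (hB : MeasurableSet B) {ε : ℝ≥0∞} (hε : 0 < ε) :
    ∃ (F : Finset ι) (S : Set (∀ i : F, α i)), MeasurableSet S ∧ μ (B ∆ cylinder F S) < ε := by
  obtain ⟨C, hC, hCB⟩ := exists_measure_symmDiff_lt_of_generateFrom_isSetRing (μ := μ)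
    isSetRing_measurableCylinders
    ⟨{univ}, countable_singleton _, singleton_subset_iff.mpr (univ_mem_measurableCylinders α),
      by simp⟩
    generateFrom_measurableCylinders.symm hB hε
  obtain ⟨F, S, hS, rfl⟩ := (mem_measurableCylinders C).mp hC
  exact ⟨F, S, hS, by rwa [symmDiff_comm]⟩

end PiMeasure

lemma measure_sdiff_preimage_le_symmDiff {X : Type*} [MeasurableSpace X] {μ : Measure X} {f : X → X}
    (hf : MeasurePreserving f μ μ) {B C : Set X} (hB : MeasurableSet B) (hC : MeasurableSet C)
    (hfC : f ⁻¹' C = C) : μ (B \ f ⁻¹' B) ≤ μ (B ∆ C) := by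
  have hsub : B \ f ⁻¹' B ⊆ B \ C ∪ f ⁻¹' (C \ B) := by
    rw [preimage_sdiff, hfC]
    intro x hx
    by_cases hxC : x ∈ C
    · exact Or.inr ⟨hxC, hx.2⟩
    · exact Or.inl ⟨hx.1, hxC⟩
  calc μ (B \ f ⁻¹' B)
      ≤ μ (B \ C) + μ (f ⁻¹' (C \ B)) := (measure_mono hsub).trans (measure_union_le _ _)
    _ = μ (B \ C) + μ (C \ B) := by
        rw [hf.measure_preimage (hC.diff hB).nullMeasurableSet]
    _ = μ (B ∆ C) := (measure_symmDiff_eq hB.nullMeasurableSet hC.nullMeasurableSet).symm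

lemma eventually_notMem_of_pairwise_disjoint {α ι : Type*} {J : α → Finset ι}
    (hJ : Pairwise (Disjoint on J)) (i : ι) : ∀ᶠ a in cofinite, i ∉ J a := by
  have hi : {a | i ∈ J a}.Subsingleton := fun a ha b hb => by
    by_contra hab
    exact Finset.disjoint_left.mp (hJ hab) ha hb
  exact hi.finite.eventually_cofinite_notMem

section Flip

variable {ι : Type*}

/-- The translation `x ↦ χ_I ⊕ x` of `2^ι`; addition mod 2 on `Bool` is the symmetric
difference. -/
noncomputable def flipOn (I : Set ι) (x : ι → Bool) : ι → Bool := I.boolIndicator ∆ x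

lemma flipOn_apply_of_notMem {I : Set ι} {i : ι} (hi : i ∉ I) (x : ι → Bool) :
    flipOn I x i = x i := by
  simp [flipOn, (I.notMem_iff_boolIndicator i).mp hi]

lemma flipOn_setOf_ne (x y : ι → Bool) : flipOn {i | x i ≠ y i} x = y := by
  ext i
  by_cases hi : x i = y i
  · simp [flipOn, boolIndicator, hi]
  · simp [flipOn, boolIndicator, Bool.eq_not_of_ne hi]

lemma flipOn_apply_eq_iff {I : Set ι} {x φ : ι → Bool} {i : ι} :
    flipOn I x i = φ i ↔ x i = flipOn I φ i :=
  (symmDiff_right_involutive (I.boolIndicator i)).eq_iff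

lemma measurable_flipOn (I : Set ι) : Measurable (flipOn I) :=
  measurable_pi_lambda _ fun i =>
    (Measurable.of_discrete (f := (I.boolIndicator i ∆ ·))).comp (measurable_pi_apply i)

lemma flipOn_preimage_cylinder {I : Set ι} {F : Finset ι} (hIF : Disjoint I ↑F)
    (S : Set (F → Bool)) : flipOn I ⁻¹' cylinder F S = cylinder F S := by
  ext x
  have restrict_flipOn : F.restrict (flipOn I x) = F.restrict x :=
    funext fun i => flipOn_apply_of_notMem (disjoint_right.mp hIF i.2) x
  simp only [mem_preimage, mem_cylinder, restrict_flipOn]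

lemma measurePreserving_flipOn {μ : Measure (ι → Bool)} [IsFiniteMeasure μ]
    (hμ : ∀ (I : Finset ι) (φ ψ : ι → Bool),
      μ {x | ∀ i ∈ I, x i = φ i} = μ {x | ∀ i ∈ I, x i = ψ i}) (I : Set ι) :
    MeasurePreserving (flipOn I) μ μ := by
  refine ⟨measurable_flipOn I, measure_pi_ext_of_forall_mem_eq fun F φ => ?_⟩
  have measurableSet_cyl : MeasurableSet {x : ι → Bool | ∀ i ∈ F, x i = φ i} := by
    exact MeasurableSet.pi F.countable_toSet fun i _ => measurableSet_singleton (φ i)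
  rw [Measure.map_apply (measurable_flipOn I) measurableSet_cyl]
  simp only [preimage_ofPred_eq, flipOn_apply_eq_iff]
  exact hμ F _ φ

lemma SJ_subset (J : Set ι) (B : Set (ι → Bool)) : SJ J B ⊆ B :=
  fun x hx => hx x fun _ _ => rfl

lemma SJ_eq_iInter_preimage_flipOn (J : Set ι) (B : Set (ι → Bool)) :
    SJ J B = ⋂ I ∈ 𝒫 J, flipOn I ⁻¹' B := by
  ext x
  simp only [mem_iInter, mem_preimage]
  refine ⟨fun hx I hI => hx _ fun i hi => flipOn_apply_of_notMem (fun h => hi (hI h)) x,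
    fun hx y hy => ?_⟩
  have diff_subset : {i | x i ≠ y i} ⊆ J := fun i hi => by
    by_contra hiJ
    exact hi (hy i hiJ).symm
  simpa only [flipOn_setOf_ne] using hx _ diff_subset

lemma sdiff_SJ_eq_iUnion (J : Finset ι) (B : Set (ι → Bool)) :
    B \ SJ ↑J B = ⋃ I ∈ J.powerset, B \ flipOn ↑I ⁻¹' B := by
  ext x
  simp only [SJ_eq_iInter_preimage_flipOn, Set.mem_sdiff, mem_iInter, mem_iUnion, mem_powerset_iff,
    not_forall, Finset.mem_powerset, exists_prop]
  constructor
  · rintro ⟨hxB, I, hIJ, hxI⟩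
    lift I to Finset ι using J.finite_toSet.subset hIJ
    exact ⟨I, Finset.coe_subset.mp hIJ, hxB, hxI⟩
  · rintro ⟨I, hIJ, hxB, hxI⟩
    exact ⟨hxB, I, Finset.coe_subset.mpr hIJ, hxI⟩

lemma measure_sdiff_SJ_le {μ : Measure (ι → Bool)} {J : Finset ι}
    (hμ : ∀ I ⊆ J, MeasurePreserving (flipOn (I : Set ι)) μ μ)
    {B C : Set (ι → Bool)} (hB : MeasurableSet B) (hC : MeasurableSet C)
    (hJC : ∀ I ⊆ J, flipOn (I : Set ι) ⁻¹' C = C) :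
    μ (B \ SJ ↑J B) ≤ 2 ^ J.card * μ (B ∆ C) :=
  calc μ (B \ SJ ↑J B)
      ≤ ∑ I ∈ J.powerset, μ (B \ flipOn ↑I ⁻¹' B) := by
        rw [sdiff_SJ_eq_iUnion]
        exact measure_biUnion_finset_le _ _
    _ ≤ ∑ _I ∈ J.powerset, μ (B ∆ C) := by
        refine Finset.sum_le_sum fun I hI => ?_
        have hIJ := Finset.mem_powerset.mp hI
        exact measure_sdiff_preimage_le_symmDiff (hμ I hIJ) hB hC (hJC I hIJ)
    _ = 2 ^ J.card * μ (B ∆ C) := by simp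

section Limit

variable {α : Type*} {l : Filter α} {μ : Measure (ι → Bool)} [IsFiniteMeasure μ]
  {B : Set (ι → Bool)} {J : α → Finset ι} {k : ℕ}

lemma tendsto_measure_sdiff_SJ (hμ : ∀ I : Finset ι, MeasurePreserving (flipOn (I : Set ι)) μ μ)
    (hB : MeasurableSet B) (hJ : ∀ i, ∀ᶠ a in l, i ∉ J a) (hk : ∀ᶠ a in l, (J a).card ≤ k) :
    Tendsto (fun a => μ (B \ SJ ↑(J a) B)) l (𝓝 0) := by
  rw [ENNReal.tendsto_nhds_zero]
  intro ε hε
  have pow_ne_zero : (2 : ℝ≥0∞) ^ k ≠ 0 := by simp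
  have pow_ne_top : (2 : ℝ≥0∞) ^ k ≠ ∞ := by simp
  obtain ⟨F, S, hS, hBS⟩ :=
    exists_measure_symmDiff_cylinder_lt μ hB (ENNReal.div_pos hε.ne' pow_ne_top)
  have eventually_avoids : ∀ᶠ a in l, ∀ i ∈ F, i ∉ J a :=
    (eventually_all_finset F).mpr fun i _ => hJ i
  filter_upwards [eventually_avoids, hk] with a haF hak
  have flipOn_cylinder (I) (hI : I ⊆ J a) :
      flipOn (I : Set ι) ⁻¹' cylinder F S = cylinder F S :=
    flipOn_preimage_cylinder (disjoint_right.mpr fun i hi hiI => haF i hi (hI hiI)) S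
  calc μ (B \ SJ ↑(J a) B)
      ≤ 2 ^ (J a).card * μ (B ∆ cylinder F S) :=
        measure_sdiff_SJ_le (fun I _ => hμ I) hB hS.cylinder flipOn_cylinder
    _ ≤ 2 ^ k * (ε / 2 ^ k) := by
        gcongr
        exact one_le_two
    _ = ε := ENNReal.mul_div_cancel pow_ne_zero pow_ne_top

theorem tendsto_measure_SJ_general
    (hμ : ∀ I : Finset ι, MeasurePreserving (flipOn (I : Set ι)) μ μ) (hB : MeasurableSet B)
    (hJ : ∀ i, ∀ᶠ a in l, i ∉ J a) (hk : ∀ᶠ a in l, (J a).card ≤ k) :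
    Tendsto (fun a => μ (SJ ↑(J a) B)) l (𝓝 (μ B)) := by
  have lower_bound (a : α) : μ B - μ (B \ SJ ↑(J a) B) ≤ μ (SJ ↑(J a) B) := by
    simpa only [sdiff_sdiff_cancel_left (SJ_subset _ B)] using
      le_measure_sdiff (μ := μ) (s₁ := B) (s₂ := B \ SJ ↑(J a) B)
  have lower_limit : Tendsto (fun a => μ B - μ (B \ SJ ↑(J a) B)) l (𝓝 (μ B)) := by
    simpa using ENNReal.Tendsto.sub tendsto_const_nhds (tendsto_measure_sdiff_SJ hμ hB hJ hk)
      (Or.inl (measure_ne_top μ B))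
  exact tendsto_of_tendsto_of_tendsto_of_le_of_le lower_limit tendsto_const_nhds lower_bound
    fun a => measure_mono (SJ_subset _ B)

end Limit

end Flip

theorem tendsto_measure_SJ
    {ι : Type*} (hι : Cardinal.mk ι = Cardinal.aleph 1)
    (lam : Measure (ι → Bool)) [IsProbabilityMeasure lam]
    (hlam : ∀ (I : Finset ι) (φ : ι → Bool),
      lam {x : ι → Bool | ∀ i ∈ I, x i = φ i} = (1 / 2 : ENNReal) ^ I.card)
    (B : Set (ι → Bool)) (hB : MeasurableSet B)
    (J : ℕ → Finset ι) (hJdisj : ∀ m n, m ≠ n → Disjoint (J m) (J n))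
    (k : ℕ) (hk : ∀ n, (J n).card ≤ k) :
    Filter.Tendsto (fun n => lam (SJ (↑(J n) : Set ι) B)) Filter.atTop (nhds (lam B)) := by
  have lam_flip_invariant (I : Finset ι) : MeasurePreserving (flipOn (I : Set ι)) lam lam :=
    measurePreserving_flipOn (fun F φ ψ => (hlam F φ).trans (hlam F ψ).symm) I
  rw [← Nat.cofinite_eq_atTop]
  exact tendsto_measure_SJ_general lam_flip_invariant hB
    (eventually_notMem_of_pairwise_disjoint fun m n => hJdisj m n) (Eventually.of_forall hk)
end
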